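/- arXiv:1608.04575 — 2 statements merged into one kernel-verified Lean document; each statement's English description precedes it below -/
import Mathlib

section
/- Let a = (a₁,…,aₙ) ∈ [1,∞)ⁿ. There exist four functions φ₀, φ, ψ₀, ψ ∈ 𝓢(ℝⁿ) supported in the open half-space ℝⁿ₋ = {x ∈ ℝⁿ : xₙ < 0}, with φ and ψ having vanishing moments of all orders, such that for every u ∈ 𝓢'(ℝⁿ) the Calderón reproducing formula u = Σ_{j=0}^∞ ψ_j * (φ_j * u) holds, the series converging in the weak* topology of 𝓢'(ℝⁿ); here ψ_j * (φ_j * u) is the tempered distribution η ↦ ⟨u, (ψ_j*φ_j)̌ * η⟩. -/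
open MeasureTheory Filter Topology

noncomputable section

/-- Anisotropic dilation: `θ_0 = θ₀` and `θ_j(x) = 2^{j|a|} θ(2^{ja}x)` for `j ≥ 1`. -/
def anisoDil {m : ℕ} (a : Fin m → ℝ) (θ₀ θ : (Fin m → ℝ) → ℝ) (j : ℕ)
    (x : Fin m → ℝ) : ℝ :=
  if j = 0 then θ₀ x
  else (2:ℝ) ^ ((j:ℝ) * ∑ i, a i) * θ (fun i => (2:ℝ) ^ ((j:ℝ) * a i) * x i)

/-- `θ` has vanishing moments of all orders: `∫ x^α θ(x) dx = 0` for every multi-index `α`. -/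
def VanishingMoments {m : ℕ} (θ : (Fin m → ℝ) → ℝ) : Prop :=
  ∀ α : Fin m → ℕ, (∫ x : Fin m → ℝ, (∏ i, x i ^ α i) * θ x) = 0

/-!
In the convolution algebra of Schwartz functions let `S(z) = 3z² - 2z³`, so that `S(1) = 1` and
`S'(1) = 0`. Let `Φ` have the moments of the Dirac mass and let `s` be its dilate by `2^{-a}`, which
has the same moments. Then `S(Φ) - S(s) = ψ * (Φ - s)`, where the divided difference `ψ` of `S` has
vanishing moments because `S'(1) = 0`. Taking `φ = Φ - s` and `ψ₀ * φ₀ = S(Φ)`, the partial sums of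
`∑ ψ_j * φ_j` telescope to the dilates of `S(Φ)`, which form an approximate identity.

All these functions are supported where `Φ` is, so it remains to find `Φ` supported in a negative
orthant, and a tensor product reduces this to the line. All moments of
`q(x) = x^{-1/2} cos(2πb log x) exp(-b log² x)`, `x > 0`, vanish; hence `q(x) / (1 + x)` is
orthogonal to `(1 + x)^k` for `k ≥ 1`, while its integral is nonzero for small `b`. Reflect it about
`-1/2` and normalise.
-/

open scoped SchwartzMap

section TranslateAverage

variable {E F V : Type*} [NormedAddCommGroup E] [NormedSpace ℝ E] [NormedAddCommGroup F]
  [NormedSpace ℝ F] [NormedAddCommGroup V] [NormedSpace ℝ V]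

theorem differentiable_iteratedFDeriv_schwartz (f : 𝓢(E, F)) (n : ℕ) :
    Differentiable ℝ (iteratedFDeriv ℝ n f) :=
  (f.smooth ⊤).differentiable_iteratedFDeriv (mod_cast WithTop.coe_lt_top n)

theorem continuous_fderiv_iteratedFDeriv_schwartz (f : 𝓢(E, F)) (n : ℕ) :
    Continuous (fderiv ℝ (iteratedFDeriv ℝ n f)) :=
  ((f.smooth ⊤).iteratedFDeriv_right (m := 1) (mod_cast le_top)).continuous_fderiv one_ne_zero

theorem exists_norm_pow_mul_iteratedFDeriv_add_le (f : 𝓢(E, F)) (k n : ℕ) :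
    ∃ C, 0 ≤ C ∧ ∀ x w, ‖x‖ ^ k * ‖iteratedFDeriv ℝ n f (x + w)‖ ≤ C * (1 + ‖w‖) ^ k := by
  have hf := f.one_add_le_sup_seminorm_apply (𝕜 := ℝ) (m := (k, n)) le_rfl le_rfl
  refine ⟨_, le_trans (by positivity) (hf 0), fun x w => ?_⟩
  have hx : ‖x‖ ≤ (1 + ‖x + w‖) * (1 + ‖w‖) := by
    have : ‖x‖ ≤ ‖x + w‖ + ‖w‖ := by simpa using norm_sub_le (x + w) w
    nlinarith [norm_nonneg w, mul_nonneg (norm_nonneg (x + w)) (norm_nonneg w)]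
  calc ‖x‖ ^ k * ‖iteratedFDeriv ℝ n f (x + w)‖
      ≤ ((1 + ‖x + w‖) * (1 + ‖w‖)) ^ k * ‖iteratedFDeriv ℝ n f (x + w)‖ := by gcongr
    _ = ((1 + ‖x + w‖) ^ k * ‖iteratedFDeriv ℝ n f (x + w)‖) * (1 + ‖w‖) ^ k := by
        rw [mul_pow]; ring
    _ ≤ _ := mul_le_mul_of_nonneg_right (hf _) (by positivity)

theorem exists_norm_pow_mul_iteratedFDeriv_add_sub_le (f : 𝓢(E, F)) (k n : ℕ) :
    ∃ C, 0 ≤ C ∧ ∀ x w, ‖x‖ ^ k * ‖iteratedFDeriv ℝ n f (x + w) - iteratedFDeriv ℝ n f x‖ ≤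
      C * (1 + ‖w‖) ^ k * ‖w‖ := by
  obtain ⟨C, hC, h⟩ := exists_norm_pow_mul_iteratedFDeriv_add_le f k (n + 1)
  refine ⟨C, hC, fun x w => ?_⟩
  have hd := differentiable_iteratedFDeriv_schwartz f n
  have key := Convex.norm_image_sub_le_of_norm_fderiv_le (𝕜 := ℝ) (C := C * (1 + ‖w‖) ^ k)
    (fun y _ => (hd y).fun_const_smul (‖x‖ ^ k)) ?_ (convex_segment x (x + w))
    (left_mem_segment ℝ _ _) (right_mem_segment ℝ _ _)
  · simpa only [← smul_sub, norm_smul, norm_pow, norm_norm, add_sub_cancel_left] using key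
  rw [segment_eq_image', add_sub_cancel_left]
  rintro _ ⟨t, ⟨ht₀, ht₁⟩, rfl⟩
  have htw : ‖t • w‖ ≤ ‖w‖ := by
    simpa [norm_smul, abs_of_nonneg ht₀] using mul_le_mul_of_nonneg_right ht₁ (norm_nonneg w)
  rw [fderiv_fun_const_smul (hd _), norm_smul, norm_pow, norm_norm, norm_fderiv_iteratedFDeriv]
  exact (h x (t • w)).trans (by gcongr)

theorem one_add_norm_apply_le (L : V →L[ℝ] E) (z : V) :
    1 + ‖L z‖ ≤ (1 + ‖L‖) * (1 + ‖z‖) := by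
  nlinarith [L.le_opNorm z, norm_nonneg L, norm_nonneg z]

variable [MeasurableSpace V] [BorelSpace V] [SecondCountableTopology V]
  {μ : Measure V} [μ.HasTemperateGrowth]

theorem integrable_one_add_norm_pow_mul_norm (f : 𝓢(V, F)) (k : ℕ) :
    Integrable (fun x => (1 + ‖x‖) ^ k * ‖f x‖) μ := by
  simp only [add_pow, one_pow, one_mul, Finset.sum_mul, mul_right_comm _ _ ‖f _‖]
  exact integrable_finsetSum _ fun j _ => (f.integrable_pow_mul μ _).mul_const _

theorem integrable_smul_iteratedFDeriv_translate (T : 𝓢(V, ℝ)) (η : 𝓢(E, F)) (L : V →L[ℝ] E)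
    (n : ℕ) (x : E) : Integrable (fun z => T z • iteratedFDeriv ℝ n η (x + L z)) μ := by
  obtain ⟨C, -, hη⟩ := exists_norm_pow_mul_iteratedFDeriv_add_le η 0 n
  have hη_cont := (differentiable_iteratedFDeriv_schwartz η n).continuous
  refine (T.integrable.norm.const_mul C).mono' (by fun_prop) (ae_of_all _ fun z => ?_)
  rw [norm_smul, mul_comm]
  gcongr
  simpa using hη x (L z)

theorem integrable_smul_translate (T : 𝓢(V, ℝ)) (η : 𝓢(E, F)) (L : V →L[ℝ] E) (x : E) :
    Integrable (fun z => T z • η (x + L z)) μ := by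
  refine (T.integrable.norm.mul_const (SchwartzMap.seminorm ℝ 0 0 η)).mono' (by fun_prop)
    (ae_of_all _ fun z => ?_)
  rw [norm_smul]
  gcongr
  exact η.norm_le_seminorm ℝ _

theorem hasFDerivAt_integral_smul_iteratedFDeriv_translate (T : 𝓢(V, ℝ)) (η : 𝓢(E, F))
    (L : V →L[ℝ] E) (n : ℕ) (x : E) :
    HasFDerivAt (fun x => ∫ z, T z • iteratedFDeriv ℝ n η (x + L z) ∂μ)
      (∫ z, T z • fderiv ℝ (iteratedFDeriv ℝ n η) (x + L z) ∂μ) x := by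
  obtain ⟨C, -, hη⟩ := exists_norm_pow_mul_iteratedFDeriv_add_le η 0 (n + 1)
  have hη_diff := differentiable_iteratedFDeriv_schwartz η n
  have hη_cont := hη_diff.continuous
  have hη_cont' := continuous_fderiv_iteratedFDeriv_schwartz η n
  refine hasFDerivAt_integral_of_dominated_of_fderiv_le (bound := fun z => C * ‖T z‖)
    (F := fun y z => T z • iteratedFDeriv ℝ n η (y + L z))
    (F' := fun y z => T z • fderiv ℝ (iteratedFDeriv ℝ n η) (y + L z)) univ_mem
    (Eventually.of_forall fun y => by fun_prop)
    (integrable_smul_iteratedFDeriv_translate T η L n x) (by fun_prop)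
    (ae_of_all _ fun z y _ => ?_) (T.integrable.norm.const_mul C) (ae_of_all _ fun z y _ => ?_)
  · rw [norm_smul, mul_comm, norm_fderiv_iteratedFDeriv]
    gcongr
    simpa using hη y (L z)
  · exact ((hasFDerivAt_comp_add_right (L z)).2 (hη_diff _).hasFDerivAt).const_smul (T z)

theorem iteratedFDeriv_integral_smul_translate (T : 𝓢(V, ℝ)) (η : 𝓢(E, F)) (L : V →L[ℝ] E)
    (n : ℕ) : iteratedFDeriv ℝ n (fun x => ∫ z, T z • η (x + L z) ∂μ) =
      fun x => ∫ z, T z • iteratedFDeriv ℝ n η (x + L z) ∂μ := by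
  induction n with
  | zero =>
    ext1 x
    simp only [iteratedFDeriv_zero_eq_comp, Function.comp_apply, ← map_smul]
    exact ((continuousMultilinearCurryFin0 ℝ E F).symm.toContinuousLinearEquiv.integral_comp_comm
      _).symm
  | succ n ih =>
    ext1 x
    rw [iteratedFDeriv_succ_eq_comp_left, ih, Function.comp_apply,
      (hasFDerivAt_integral_smul_iteratedFDeriv_translate T η L n x).fderiv,
      iteratedFDeriv_succ_eq_comp_left]
    simp only [Function.comp_apply, ← map_smul]
    exact ((continuousMultilinearCurryLeftEquiv ℝ
      (fun _ => E) F).symm.toContinuousLinearEquiv.integral_comp_comm (𝕜 := ℝ)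
      fun z => T z • fderiv ℝ (iteratedFDeriv ℝ n η) (x + L z)).symm

theorem contDiff_integral_smul_translate (T : 𝓢(V, ℝ)) (η : 𝓢(E, F)) (L : V →L[ℝ] E) :
    ContDiff ℝ (⊤ : ℕ∞) fun x => ∫ z, T z • η (x + L z) ∂μ := by
  refine contDiff_of_differentiable_iteratedFDeriv fun n _ => ?_
  rw [iteratedFDeriv_integral_smul_translate T η L n]
  exact fun x => (hasFDerivAt_integral_smul_iteratedFDeriv_translate T η L n x).differentiableAt

theorem exists_norm_pow_mul_iteratedFDeriv_integral_smul_translate_le (T : 𝓢(V, ℝ)) (η : 𝓢(E, F))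
    (L : V →L[ℝ] E) (k n : ℕ) : ∃ C, ∀ x,
      ‖x‖ ^ k * ‖iteratedFDeriv ℝ n (fun x => ∫ z, T z • η (x + L z) ∂μ) x‖ ≤ C := by
  obtain ⟨C, hC, hη⟩ := exists_norm_pow_mul_iteratedFDeriv_add_le η k n
  refine ⟨∫ z, C * (1 + ‖L‖) ^ k * ((1 + ‖z‖) ^ k * ‖T z‖) ∂μ, fun x => ?_⟩
  rw [iteratedFDeriv_integral_smul_translate T η L n, ← norm_norm x, ← norm_pow, ← norm_smul,
    ← integral_smul]
  refine norm_integral_le_of_norm_le ((integrable_one_add_norm_pow_mul_norm T k).const_mul _)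
    (ae_of_all _ fun z => ?_)
  calc ‖‖x‖ ^ k • T z • iteratedFDeriv ℝ n η (x + L z)‖
      = ‖x‖ ^ k * ‖iteratedFDeriv ℝ n η (x + L z)‖ * ‖T z‖ := by
        rw [norm_smul, norm_smul, norm_pow, norm_norm]; ring
    _ ≤ C * ((1 + ‖L‖) * (1 + ‖z‖)) ^ k * ‖T z‖ := by
        refine mul_le_mul_of_nonneg_right ((hη x (L z)).trans ?_) (norm_nonneg _)
        gcongr
        exact one_add_norm_apply_le L z
    _ = _ := by rw [mul_pow]; ring

variable (μ) in
/-- The average `x ↦ ∫ T(z) η(x + L z) dμ(z)` of the translates of `η` along the linear map `L`,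
as a bilinear map in `(T, η)`. Convolution is the case `L = -id`, and the pairing in the Calderón
formula is the case `L = id`. -/
def translateAverage (L : V →L[ℝ] E) : 𝓢(V, ℝ) →ₗ[ℝ] 𝓢(E, F) →ₗ[ℝ] 𝓢(E, F) :=
  LinearMap.mk₂ ℝ
    (fun T η => ⟨fun x => ∫ z, T z • η (x + L z) ∂μ, contDiff_integral_smul_translate T η L,
      exists_norm_pow_mul_iteratedFDeriv_integral_smul_translate_le T η L⟩)
    (fun T₁ T₂ η => SchwartzMap.ext fun x =>
      (integral_congr_ae (ae_of_all _ fun _ => add_smul _ _ _)).trans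
        (integral_add (integrable_smul_translate T₁ η L x) (integrable_smul_translate T₂ η L x)))
    (fun c T η => SchwartzMap.ext fun x =>
      (integral_congr_ae (ae_of_all _ fun z => smul_assoc c (T z) (η (x + L z)))).trans
        (integral_smul c _))
    (fun T η₁ η₂ => SchwartzMap.ext fun x =>
      (integral_congr_ae (ae_of_all _ fun _ => smul_add _ _ _)).trans
        (integral_add (integrable_smul_translate T η₁ L x) (integrable_smul_translate T η₂ L x)))
    (fun c T η => SchwartzMap.ext fun x =>
      (integral_congr_ae (ae_of_all _ fun z => smul_comm (T z) c (η (x + L z)))).trans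
        (integral_smul c _))

theorem translateAverage_apply (T : 𝓢(V, ℝ)) (η : 𝓢(E, F)) (L : V →L[ℝ] E) (x : E) :
    translateAverage μ L T η x = ∫ z, T z • η (x + L z) ∂μ := rfl

variable [CompleteSpace F]

theorem iteratedFDeriv_translateAverage_sub (T : 𝓢(V, ℝ)) (η : 𝓢(E, F)) (L : V →L[ℝ] E)
    (hT : ∫ z, T z ∂μ = 1) (n : ℕ) (x : E) :
    iteratedFDeriv ℝ n (translateAverage μ L T η - η) x =
      ∫ z, T z • (iteratedFDeriv ℝ n η (x + L z) - iteratedFDeriv ℝ n η x) ∂μ := by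
  have hcoe : ⇑(translateAverage μ L T η - η) = (fun x => ∫ z, T z • η (x + L z) ∂μ) - ⇑η := rfl
  simp_rw [smul_sub]
  rw [integral_sub (integrable_smul_iteratedFDeriv_translate T η L n x)
      (T.integrable.smul_const _), integral_smul_const, hT, one_smul, hcoe,
    iteratedFDeriv_sub_apply
      ((contDiff_integral_smul_translate T η L).contDiffAt.of_le (mod_cast le_top))
      ((η.smooth ⊤).contDiffAt.of_le (mod_cast le_top)),
    iteratedFDeriv_integral_smul_translate T η L n]

theorem exists_seminorm_translateAverage_sub_le (T : 𝓢(V, ℝ)) (η : 𝓢(E, F))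
    (hT : ∫ z, T z ∂μ = 1) (k n : ℕ) : ∃ C, ∀ L : V →L[ℝ] E,
      SchwartzMap.seminorm ℝ k n (translateAverage μ L T η - η) ≤ ‖L‖ * (1 + ‖L‖) ^ k * C := by
  obtain ⟨C, hC, hη⟩ := exists_norm_pow_mul_iteratedFDeriv_add_sub_le η k n
  have hI : 0 ≤ ∫ z, C * ((1 + ‖z‖) ^ (k + 1) * ‖T z‖) ∂μ :=
    integral_nonneg fun z => by positivity
  refine ⟨∫ z, C * ((1 + ‖z‖) ^ (k + 1) * ‖T z‖) ∂μ, fun L =>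
    SchwartzMap.seminorm_le_bound ℝ k n _ (mul_nonneg (by positivity) hI) fun x => ?_⟩
  rw [iteratedFDeriv_translateAverage_sub T η L hT, ← norm_norm x, ← norm_pow, ← norm_smul,
    ← integral_smul, ← integral_const_mul]
  refine norm_integral_le_of_norm_le
    (((integrable_one_add_norm_pow_mul_norm T (k + 1)).const_mul C).const_mul _)
    (ae_of_all _ fun z => ?_)
  calc ‖‖x‖ ^ k • T z • (iteratedFDeriv ℝ n η (x + L z) - iteratedFDeriv ℝ n η x)‖
      = ‖x‖ ^ k * ‖iteratedFDeriv ℝ n η (x + L z) - iteratedFDeriv ℝ n η x‖ * ‖T z‖ := by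
        rw [norm_smul, norm_smul, norm_pow, norm_norm]; ring
    _ ≤ C * ((1 + ‖L‖) * (1 + ‖z‖)) ^ k * (‖L‖ * (1 + ‖z‖)) * ‖T z‖ := by
        refine mul_le_mul_of_nonneg_right ((hη x (L z)).trans ?_) (norm_nonneg _)
        gcongr
        · exact one_add_norm_apply_le L z
        · exact (L.le_opNorm z).trans (by gcongr; linarith)
    _ = _ := by rw [mul_pow]; ring

theorem tendsto_translateAverage {ι : Type*} {l : Filter ι} (T : 𝓢(V, ℝ)) (η : 𝓢(E, F))
    (hT : ∫ z, T z ∂μ = 1) {L : ι → V →L[ℝ] E} (hL : Tendsto L l (𝓝 0)) :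
    Tendsto (fun i => translateAverage μ (L i) T η) l (𝓝 η) := by
  rw [(schwartz_withSeminorms ℝ E F).tendsto_nhds]
  rintro ⟨k, n⟩ ε hε
  obtain ⟨C, hC⟩ := exists_seminorm_translateAverage_sub_le T η hT k n
  have hlim : Tendsto (fun i => ‖L i‖ * (1 + ‖L i‖) ^ k * C) l (𝓝 0) := by
    simpa using (hL.norm.mul ((hL.norm.const_add 1).pow k)).mul_const C
  filter_upwards [hlim.eventually_lt_const hε] with i hi using (hC (L i)).trans_lt hi

end TranslateAverage

section Convolution

variable {E : Type*} [NormedAddCommGroup E] [NormedSpace ℝ E] [MeasureSpace E] [BorelSpace E]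
  [SecondCountableTopology E] [FiniteDimensional ℝ E] [(volume : Measure E).IsAddHaarMeasure]

/-- Convolution of real Schwartz functions, as a bilinear map. -/
def schwartzConv : 𝓢(E, ℝ) →ₗ[ℝ] 𝓢(E, ℝ) →ₗ[ℝ] 𝓢(E, ℝ) :=
  translateAverage volume (-ContinuousLinearMap.id ℝ E)

theorem schwartzConv_apply (f g : 𝓢(E, ℝ)) (x : E) :
    schwartzConv f g x = ∫ z, f z * g (x - z) := by
  simp [schwartzConv, translateAverage_apply, sub_eq_add_neg]

theorem coe_schwartzConv (f g : 𝓢(E, ℝ)) :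
    ⇑(schwartzConv f g) = convolution f g (.mul ℝ ℝ) volume := by
  ext x
  rw [schwartzConv_apply, convolution_mul]

theorem schwartzConv_comm (f g : 𝓢(E, ℝ)) : schwartzConv f g = schwartzConv g f := by
  ext x
  rw [schwartzConv_apply, schwartzConv_apply, ← integral_sub_left_eq_self _ volume x]
  simp only [sub_sub_cancel, mul_comm]

theorem schwartzConv_apply_swap (f g : 𝓢(E, ℝ)) (x : E) :
    schwartzConv f g x = ∫ z, f (x - z) * g z := by
  simp_rw [schwartzConv_comm f g, schwartzConv_apply, mul_comm]

theorem schwartzConv_assoc (f g h : 𝓢(E, ℝ)) :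
    schwartzConv (schwartzConv f g) h = schwartzConv f (schwartzConv g h) := by
  ext x
  simp only [coe_schwartzConv]
  have hf : Integrable f := f.integrable
  have hg : Integrable g := g.integrable
  have hh : Integrable h := h.integrable
  have hbdd : BddAbove (Set.range fun t => ‖convolution (‖g ·‖) (‖h ·‖) (.mul ℝ ℝ) volume t‖) := by
    refine ⟨∫ t, ‖g t‖ * SchwartzMap.seminorm ℝ 0 0 h, ?_⟩
    rintro _ ⟨t, rfl⟩
    refine norm_integral_le_of_norm_le (hg.norm.mul_const _) (ae_of_all _ fun z => ?_)
    simp only [ContinuousLinearMap.mul_apply', norm_mul, norm_norm]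
    gcongr
    exact h.norm_le_seminorm ℝ _
  exact convolution_assoc _ _ _ _ (fun a b c => mul_assoc a b c) hf.1 hg.1 hh.1
    (hf.ae_convolution_exists _ hg) (hg.norm.ae_convolution_exists _ hh.norm)
    (BddAbove.convolutionExistsAt _ (by simpa using hbdd) MeasurableSet.univ
      (Set.subset_univ _) hf.norm.integrableOn
      (hg.norm.integrable_convolution _ hh.norm).aestronglyMeasurable)

theorem schwartzConv_left_comm (f g h : 𝓢(E, ℝ)) :
    schwartzConv f (schwartzConv g h) = schwartzConv g (schwartzConv f h) := by
  rw [← schwartzConv_assoc, schwartzConv_comm f g, schwartzConv_assoc]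

/-- The function `3f - 2f * f`; its convolution with `f` is the smoothstep polynomial `3z² - 2z³`
evaluated at `f` in the convolution algebra. -/
def smoothstepCofactor (f : 𝓢(E, ℝ)) : 𝓢(E, ℝ) :=
  (3 : ℝ) • f - (2 : ℝ) • schwartzConv f f

/-- The divided difference `3(f + g) - 2(f * f + f * g + g * g)` of the smoothstep polynomial
`3z² - 2z³` in the convolution algebra. -/
def smoothstepDivDiff (f g : 𝓢(E, ℝ)) : 𝓢(E, ℝ) :=
  (3 : ℝ) • (f + g) - (2 : ℝ) • (schwartzConv f f + schwartzConv f g + schwartzConv g g)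

theorem schwartzConv_smoothstepDivDiff_sub (f g : 𝓢(E, ℝ)) :
    schwartzConv (smoothstepDivDiff f g) (f - g) =
      schwartzConv (smoothstepCofactor f) f - schwartzConv (smoothstepCofactor g) g := by
  simp only [smoothstepDivDiff, smoothstepCofactor, map_add, map_sub, map_smul,
    LinearMap.add_apply, LinearMap.sub_apply, LinearMap.smul_apply, schwartzConv_comm,
    schwartzConv_left_comm]
  module

end Convolution

section Dilation

variable {ι : Type*}

/-- The anisotropic scaling `x ↦ 2^{ta} x`, for a real exponent `t`. -/
def anisoScale (a : ι → ℝ) (t : ℝ) : (ι → ℝ) ≃L[ℝ] (ι → ℝ) :=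
  ContinuousLinearEquiv.piCongrRight fun i => ContinuousLinearEquiv.unitsEquivAut ℝ
    (Units.mk0 ((2 : ℝ) ^ (t * a i)) (Real.rpow_pos_of_pos two_pos _).ne')

theorem anisoScale_apply (a : ι → ℝ) (t : ℝ) (x : ι → ℝ) (i : ι) :
    anisoScale a t x i = (2 : ℝ) ^ (t * a i) * x i := by
  simp [anisoScale, mul_comm]

theorem anisoScale_anisoScale (a : ι → ℝ) (s t : ℝ) (x : ι → ℝ) :
    anisoScale a s (anisoScale a t x) = anisoScale a (s + t) x := by
  ext i
  simp [anisoScale_apply, add_mul, Real.rpow_add two_pos, mul_assoc]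

@[simp]
theorem anisoScale_zero (a : ι → ℝ) (x : ι → ℝ) : anisoScale a 0 x = x := by
  ext i
  simp [anisoScale_apply]

theorem tendsto_anisoScale_atBot [Finite ι] {a : ι → ℝ} (ha : ∀ i, 0 < a i) :
    Tendsto (fun t => (anisoScale a t : (ι → ℝ) →L[ℝ] (ι → ℝ))) atBot (𝓝 0) := by
  cases nonempty_fintype ι
  have hfactor : Tendsto (fun t i => (2 : ℝ) ^ (t * a i)) atBot (𝓝 0) :=
    tendsto_pi_nhds.2 fun i => (tendsto_rpow_atBot_of_base_gt_one 2 one_lt_two).comp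
      (tendsto_id.atBot_mul_const (ha i))
  refine squeeze_zero_norm (fun t => ?_) (by simpa using hfactor.norm)
  refine ContinuousLinearMap.opNorm_le_bound _ (norm_nonneg _) fun x => ?_
  rw [show (anisoScale a t : (ι → ℝ) →L[ℝ] (ι → ℝ)) x = (fun i => (2 : ℝ) ^ (t * a i)) * x from
    funext (anisoScale_apply a t x)]
  exact norm_mul_le _ _

variable [Fintype ι]

theorem integral_comp_anisoScale (a : ι → ℝ) (t : ℝ) (F : (ι → ℝ) → ℝ) :
    (2 : ℝ) ^ (t * ∑ i, a i) * ∫ x, F (anisoScale a t x) = ∫ x, F x := by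
  classical
  have hdet : (Matrix.diagonal fun i => (2 : ℝ) ^ (t * a i)).det = (2 : ℝ) ^ (t * ∑ i, a i) := by
    rw [Matrix.det_diagonal, Finset.mul_sum, Real.rpow_sum_of_pos two_pos]
  have hpos : (0 : ℝ) < 2 ^ (t * ∑ i, a i) := Real.rpow_pos_of_pos two_pos _
  have hvol := Real.smul_map_diagonal_volume_pi (D := fun i => (2 : ℝ) ^ (t * a i))
    (hdet ▸ hpos.ne')
  have hcoe : ⇑(Matrix.toLin' (Matrix.diagonal fun i => (2 : ℝ) ^ (t * a i))) =
      (anisoScale a t).toHomeomorph.toMeasurableEquiv := by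
    ext x i
    simp [anisoScale_apply, Matrix.toLin'_apply, Matrix.mulVec_diagonal]
  rw [hdet, abs_of_pos hpos, hcoe] at hvol
  conv_rhs => rw [← hvol, integral_smul_measure, ENNReal.toReal_ofReal hpos.le, integral_map_equiv]
  rfl

/-- The `L¹`-normalised anisotropic dilation `x ↦ 2^{t|a|} f(2^{ta} x)`, for a real exponent `t`.
At `t = j ≥ 1` it is the dilation `f_j`. -/
def dilate (a : ι → ℝ) (t : ℝ) : 𝓢(ι → ℝ, ℝ) →ₗ[ℝ] 𝓢(ι → ℝ, ℝ) :=
  (2 : ℝ) ^ (t * ∑ i, a i) •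
    (SchwartzMap.compCLMOfContinuousLinearEquiv ℝ (anisoScale a t)).toLinearMap

theorem dilate_apply (a : ι → ℝ) (t : ℝ) (f : 𝓢(ι → ℝ, ℝ)) (x : ι → ℝ) :
    dilate a t f x = (2 : ℝ) ^ (t * ∑ i, a i) * f (anisoScale a t x) := rfl

theorem dilate_dilate (a : ι → ℝ) (s t : ℝ) (f : 𝓢(ι → ℝ, ℝ)) :
    dilate a s (dilate a t f) = dilate a (t + s) f := by
  ext x
  simp only [dilate_apply, anisoScale_anisoScale, add_mul, Real.rpow_add two_pos]
  ring

theorem dilate_zero (a : ι → ℝ) (f : 𝓢(ι → ℝ, ℝ)) : dilate a 0 f = f := by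
  ext x
  simp [dilate_apply]

theorem integral_dilate_mul (a : ι → ℝ) (t : ℝ) (f : 𝓢(ι → ℝ, ℝ)) (F : (ι → ℝ) → ℝ) :
    ∫ x, dilate a t f x * F x = ∫ x, f x * F (anisoScale a (-t) x) := by
  rw [← integral_comp_anisoScale a t (fun x => f x * F (anisoScale a (-t) x)),
    ← integral_const_mul]
  simp only [dilate_apply, anisoScale_anisoScale, neg_add_cancel, anisoScale_zero, mul_assoc]

theorem dilate_schwartzConv (a : ι → ℝ) (t : ℝ) (f g : 𝓢(ι → ℝ, ℝ)) :
    dilate a t (schwartzConv f g) = schwartzConv (dilate a t f) (dilate a t g) := by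
  ext x
  rw [schwartzConv_apply, integral_dilate_mul a t f fun z => dilate a t g (x - z), dilate_apply,
    schwartzConv_apply, ← integral_const_mul]
  simp only [dilate_apply, map_sub, anisoScale_anisoScale, add_neg_cancel, anisoScale_zero,
    mul_left_comm]

theorem dilate_smoothstepCofactor (a : ι → ℝ) (t : ℝ) (f : 𝓢(ι → ℝ, ℝ)) :
    dilate a t (smoothstepCofactor f) = smoothstepCofactor (dilate a t f) := by
  simp only [smoothstepCofactor, map_sub, map_smul, dilate_schwartzConv]

theorem tendsto_translateAverage_dilate {a : ι → ℝ} (ha : ∀ i, 0 < a i) {T : 𝓢(ι → ℝ, ℝ)}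
    (hT : ∫ x, T x = 1) (η : 𝓢(ι → ℝ, ℝ)) :
    Tendsto (fun t => translateAverage volume (.id ℝ (ι → ℝ)) (dilate a t T) η) atTop (𝓝 η) := by
  have hscale : ∀ t, translateAverage volume (.id ℝ (ι → ℝ)) (dilate a t T) η =
      translateAverage volume (anisoScale a (-t)).toContinuousLinearMap T η := fun t => by
    ext x
    exact integral_dilate_mul a t T fun z => η (x + z)
  simp only [hscale]
  exact tendsto_translateAverage T η hT ((tendsto_anisoScale_atBot ha).comp tendsto_neg_atTop_atBot)

end Dilation

section Moments

variable {ι : Type*} [Fintype ι]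

theorem integrable_monomial_mul (f : 𝓢(ι → ℝ, ℝ)) (α : ι → ℕ) :
    Integrable fun x => (∏ i, x i ^ α i) * f x := by
  refine (f.integrable_pow_mul volume (∑ i, α i)).mono' (by fun_prop) (ae_of_all _ fun x => ?_)
  rw [norm_mul, norm_prod, ← Finset.prod_pow_eq_pow_sum]
  gcongr with i
  rw [norm_pow]
  gcongr
  exact norm_le_pi_norm x i

/-- The moment `∫ x^α f(x) dx` as a linear functional of the Schwartz function `f`. -/
def schwartzMoment (α : ι → ℕ) : 𝓢(ι → ℝ, ℝ) →ₗ[ℝ] ℝ where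
  toFun f := ∫ x, (∏ i, x i ^ α i) * f x
  map_add' f g := by
    simp_rw [add_apply, mul_add]
    exact integral_add (integrable_monomial_mul f α) (integrable_monomial_mul g α)
  map_smul' c f := by
    simp_rw [smul_apply, smul_eq_mul, mul_left_comm _ c]
    exact integral_const_mul c _

theorem schwartzMoment_apply (α : ι → ℕ) (f : 𝓢(ι → ℝ, ℝ)) :
    schwartzMoment α f = ∫ x, (∏ i, x i ^ α i) * f x := rfl

theorem schwartzMoment_dilate (a : ι → ℝ) (t : ℝ) (α : ι → ℕ) (f : 𝓢(ι → ℝ, ℝ)) :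
    schwartzMoment α (dilate a t f) =
      (∏ i, ((2 : ℝ) ^ (-t * a i)) ^ α i) * schwartzMoment α f := by
  simp_rw [schwartzMoment_apply, mul_comm _ (dilate a t f _)]
  rw [integral_dilate_mul a t f fun x => ∏ i, x i ^ α i, ← integral_const_mul]
  simp only [anisoScale_apply, mul_pow, Finset.prod_mul_distrib, mul_comm (f _), mul_assoc]

theorem prod_add_pow_eq_sum [DecidableEq ι] (α : ι → ℕ) (x z : ι → ℝ) :
    ∏ i, (x i + z i) ^ α i = ∑ β ∈ Finset.Iic α,
      (∏ i, x i ^ β i) * (∏ i, z i ^ (α - β) i) * ∏ i, ((α i).choose (β i) : ℝ) := by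
  simp_rw [add_pow, Nat.range_succ_eq_Iic, Finset.prod_univ_sum, ← Finset.prod_mul_distrib,
    Pi.sub_apply]
  rfl

theorem integral_mul_schwartzConv {f g : 𝓢(ι → ℝ, ℝ)} {F : (ι → ℝ) → ℝ}
    (hF : Integrable fun p : (ι → ℝ) × (ι → ℝ) => F (p.1 + p.2) * (f p.1 * g p.2)) :
    ∫ x, F x * schwartzConv f g x =
      ∫ p : (ι → ℝ) × (ι → ℝ), F (p.1 + p.2) * (f p.1 * g p.2) := by
  have hshear : MeasurePreserving fun p : (ι → ℝ) × (ι → ℝ) => (p.1 - p.2, p.2) :=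
    measurePreserving_sub_prod volume volume
  rw [← hshear.map_eq] at hF ⊢
  rw [integral_map hshear.aemeasurable hF.aestronglyMeasurable]
  have hF' := (integrable_map_measure hF.aestronglyMeasurable hshear.aemeasurable).1 hF
  simp only [Function.comp_def, sub_add_cancel] at hF' ⊢
  rw [Measure.volume_eq_prod, integral_prod _ hF']
  simp_rw [schwartzConv_apply_swap, integral_const_mul]

theorem schwartzMoment_schwartzConv [DecidableEq ι] (α : ι → ℕ) (f g : 𝓢(ι → ℝ, ℝ)) :
    schwartzMoment α (schwartzConv f g) =
      ∑ β ∈ Finset.Iic α,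
        schwartzMoment β f * schwartzMoment (α - β) g * ∏ i, ((α i).choose (β i) : ℝ) := by
  have hexpand : ∀ p : (ι → ℝ) × (ι → ℝ), (∏ i, (p.1 + p.2) i ^ α i) * (f p.1 * g p.2) =
      ∑ β ∈ Finset.Iic α, ((∏ i, p.1 i ^ β i) * f p.1) *
        ((∏ i, p.2 i ^ (α - β) i) * g p.2) * ∏ i, ((α i).choose (β i) : ℝ) := fun p => by
    simp_rw [Pi.add_apply, prod_add_pow_eq_sum, Finset.sum_mul]
    exact Finset.sum_congr rfl fun β _ => by ring
  have hinteg : ∀ β ∈ Finset.Iic α,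
      Integrable fun p : (ι → ℝ) × (ι → ℝ) => ((∏ i, p.1 i ^ β i) * f p.1) *
        ((∏ i, p.2 i ^ (α - β) i) * g p.2) * ∏ i, ((α i).choose (β i) : ℝ) := fun β _ =>
    ((integrable_monomial_mul f β).mul_prod (integrable_monomial_mul g (α - β))).mul_const _
  rw [schwartzMoment_apply, integral_mul_schwartzConv (F := fun x => ∏ i, x i ^ α i)
    (by simpa only [hexpand] using integrable_finsetSum _ hinteg)]
  simp_rw [hexpand]
  rw [integral_finsetSum _ hinteg]
  refine Finset.sum_congr rfl fun β _ => ?_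
  rw [integral_mul_const]
  exact congrArg (· * _) (integral_prod_mul (fun x => (∏ i, x i ^ β i) * f x)
    fun z => (∏ i, z i ^ (α - β) i) * g z)

/-- `f` has the moments of the Dirac mass at the origin. -/
def HasDiracMoments (f : 𝓢(ι → ℝ, ℝ)) : Prop :=
  ∀ α : ι → ℕ, schwartzMoment α f = if α = 0 then 1 else 0

namespace HasDiracMoments

variable {f g : 𝓢(ι → ℝ, ℝ)}

theorem integral_eq_one (hf : HasDiracMoments f) : ∫ x, f x = 1 := by
  simpa [schwartzMoment_apply] using hf 0

theorem dilate (hf : HasDiracMoments f) (a : ι → ℝ) (t : ℝ) : HasDiracMoments (dilate a t f) := by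
  intro α
  rw [schwartzMoment_dilate, hf]
  split_ifs with hα <;> simp [hα]

theorem schwartzConv (hf : HasDiracMoments f) (hg : HasDiracMoments g) :
    HasDiracMoments (schwartzConv f g) := by
  classical
  intro α
  rw [schwartzMoment_schwartzConv]
  simp_rw [hf _, ite_mul, one_mul, zero_mul]
  rw [Finset.sum_ite_eq' _ (0 : ι → ℕ)]
  simpa using hg α

theorem smoothstepCofactor (hf : HasDiracMoments f) : HasDiracMoments (smoothstepCofactor f) := by
  intro α
  simp only [_root_.smoothstepCofactor, map_sub, map_smul, hf _, hf.schwartzConv hf _, smul_eq_mul]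
  ring

theorem schwartzMoment_sub_eq_zero (hf : HasDiracMoments f) (hg : HasDiracMoments g) (α : ι → ℕ) :
    schwartzMoment α (f - g) = 0 := by
  rw [map_sub, hf, hg, sub_self]

theorem schwartzMoment_smoothstepDivDiff (hf : HasDiracMoments f) (hg : HasDiracMoments g)
    (α : ι → ℕ) : schwartzMoment α (smoothstepDivDiff f g) = 0 := by
  simp only [smoothstepDivDiff, map_sub, map_add, map_smul, hf _, hg _, hf.schwartzConv hf _,
    hf.schwartzConv hg _, hg.schwartzConv hg _, smul_eq_mul]
  ring

end HasDiracMoments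

end Moments

section Support

variable {ι : Type*} [Fintype ι]

/-- The Schwartz functions vanishing off the orthant `∏ i, (-∞, -1]`. Keeping the supports at
distance `1` from the coordinate hyperplanes makes their closures lie in the open half-spaces. -/
def negOrthantSubmodule (ι : Type*) [Fintype ι] : Submodule ℝ 𝓢(ι → ℝ, ℝ) where
  carrier := {f | ∀ x, ¬x ≤ -1 → f x = 0}
  zero_mem' _ _ := rfl
  add_mem' hf hg x hx := by rw [add_apply, hf x hx, hg x hx, add_zero]
  smul_mem' c _ hf x hx := by rw [smul_apply, hf x hx, smul_zero]

variable {f g : 𝓢(ι → ℝ, ℝ)}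

theorem tsupport_subset_of_mem_negOrthantSubmodule (hf : f ∈ negOrthantSubmodule ι) :
    tsupport ⇑f ⊆ {x | ∀ i, x i < 0} :=
  (closure_minimal (fun x hx => not_not.1 (mt (hf x) hx)) (isClosed_Iic (a := -1))).trans
    fun _ hx i => (hx i).trans_lt neg_one_lt_zero

theorem schwartzConv_mem_negOrthantSubmodule (hf : f ∈ negOrthantSubmodule ι)
    (hg : g ∈ negOrthantSubmodule ι) : schwartzConv f g ∈ negOrthantSubmodule ι := by
  intro x hx
  rw [schwartzConv_apply]
  refine integral_eq_zero_of_ae (ae_of_all _ fun z => ?_)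
  by_cases hz : z ≤ -1
  · have hxz : ¬x - z ≤ -1 := fun h => hx fun i => by
      have h₁ := h i
      have h₂ := hz i
      simp only [Pi.sub_apply, Pi.neg_apply, Pi.one_apply] at h₁ h₂ ⊢
      linarith
    simp only [hg _ hxz, mul_zero, Pi.zero_apply]
  · simp only [hf _ hz, zero_mul, Pi.zero_apply]

theorem dilate_mem_negOrthantSubmodule {a : ι → ℝ} (ha : ∀ i, 0 ≤ a i) {t : ℝ} (ht : t ≤ 0)
    (hf : f ∈ negOrthantSubmodule ι) : dilate a t f ∈ negOrthantSubmodule ι := by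
  intro x hx
  rw [dilate_apply, hf _ fun h => hx fun i => ?_, mul_zero]
  have hpos : (0 : ℝ) < 2 ^ (t * a i) := Real.rpow_pos_of_pos two_pos _
  have hle : (2 : ℝ) ^ (t * a i) ≤ 1 :=
    Real.rpow_le_one_of_one_le_of_nonpos one_le_two (mul_nonpos_of_nonpos_of_nonneg ht (ha i))
  have hi := h i
  rw [anisoScale_apply] at hi
  simp only [Pi.neg_apply, Pi.one_apply] at hi ⊢
  nlinarith

theorem smoothstepCofactor_mem_negOrthantSubmodule (hf : f ∈ negOrthantSubmodule ι) :
    smoothstepCofactor f ∈ negOrthantSubmodule ι :=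
  sub_mem (Submodule.smul_mem _ _ hf)
    (Submodule.smul_mem _ _ (schwartzConv_mem_negOrthantSubmodule hf hf))

theorem smoothstepDivDiff_mem_negOrthantSubmodule (hf : f ∈ negOrthantSubmodule ι)
    (hg : g ∈ negOrthantSubmodule ι) : smoothstepDivDiff f g ∈ negOrthantSubmodule ι :=
  sub_mem (Submodule.smul_mem _ _ (add_mem hf hg)) (Submodule.smul_mem _ _
    (add_mem (add_mem (schwartzConv_mem_negOrthantSubmodule hf hf)
      (schwartzConv_mem_negOrthantSubmodule hf hg)) (schwartzConv_mem_negOrthantSubmodule hg hg)))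

end Support

section TemperateGrowth

theorem hasTemperateGrowth_of_abs_iteratedDeriv_le {f : ℝ → ℝ} (hf : ContDiff ℝ (⊤ : ℕ∞) f)
    (hbound : ∀ n, ∃ C, ∀ x, |iteratedDeriv n f x| ≤ C) : f.HasTemperateGrowth := by
  refine ⟨hf, fun n => ?_⟩
  obtain ⟨C, hC⟩ := hbound n
  exact ⟨0, C, fun x => by simpa [norm_iteratedFDeriv_eq_norm_iteratedDeriv] using hC x⟩

theorem hasTemperateGrowth_deriv {f : ℝ → ℝ} (hf : f.HasTemperateGrowth) :
    (deriv f).HasTemperateGrowth := by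
  refine ⟨(contDiff_infty_iff_deriv.1 hf.1).2, fun n => ?_⟩
  simpa [norm_iteratedFDeriv_eq_norm_iteratedDeriv, iteratedDeriv_succ'] using hf.2 (n + 1)

theorem hasTemperateGrowth_cos : Real.cos.HasTemperateGrowth :=
  hasTemperateGrowth_of_abs_iteratedDeriv_le Real.contDiff_cos fun n =>
    ⟨1, Real.abs_iteratedDeriv_cos_le_one n⟩

open Polynomial in
theorem exists_iteratedDeriv_sigmoid_eq (n : ℕ) :
    ∃ P : ℝ[X], iteratedDeriv n Real.sigmoid = fun s => P.eval (Real.sigmoid s) := by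
  induction n with
  | zero => exact ⟨X, by simp⟩
  | succ n ih =>
    obtain ⟨P, hP⟩ := ih
    refine ⟨derivative P * (X * (1 - X)), funext fun s => ?_⟩
    rw [iteratedDeriv_succ, hP]
    simpa [Function.comp_def] using ((P.hasDerivAt _).comp s (Real.hasDerivAt_sigmoid s)).deriv

theorem hasTemperateGrowth_sigmoid : Real.sigmoid.HasTemperateGrowth := by
  refine hasTemperateGrowth_of_abs_iteratedDeriv_le (contDiff_sigmoid.of_le le_top) fun n => ?_
  obtain ⟨P, hP⟩ := exists_iteratedDeriv_sigmoid_eq n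
  obtain ⟨C, hC⟩ := (isCompact_Icc (a := (0 : ℝ)) (b := 1)).exists_bound_of_continuousOn
    P.continuous.continuousOn
  refine ⟨C, fun s => ?_⟩
  rw [hP]
  exact hC _ ⟨Real.sigmoid_nonneg s, Real.sigmoid_le_one s⟩

end TemperateGrowth

section LogGaussian

/-- The function `x ↦ u(log x) exp(c log x - b log² x)` on the positive half-line, extended by
zero. -/
def logGaussian (u : ℝ → ℝ) (b c x : ℝ) : ℝ :=
  if 0 < x then u (Real.log x) * Real.exp (c * Real.log x - b * Real.log x ^ 2) else 0

variable {u : ℝ → ℝ} {b c x : ℝ}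

theorem logGaussian_of_pos (hx : 0 < x) : logGaussian u b c x =
    u (Real.log x) * Real.exp (c * Real.log x - b * Real.log x ^ 2) := if_pos hx

theorem logGaussian_of_nonpos (hx : x ≤ 0) : logGaussian u b c x = 0 := if_neg hx.not_gt

theorem pow_mul_logGaussian (u : ℝ → ℝ) (b c x : ℝ) (k : ℕ) :
    x ^ k * logGaussian u b c x = logGaussian u b (c + k) x := by
  rcases le_or_gt x 0 with hx | hx
  · rw [logGaussian_of_nonpos hx, logGaussian_of_nonpos hx, mul_zero]
  · have hpow : x ^ k = Real.exp (k * Real.log x) := by rw [Real.exp_nat_mul, Real.exp_log hx]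
    rw [logGaussian_of_pos hx, logGaussian_of_pos hx, mul_left_comm, hpow, ← Real.exp_add]
    ring_nf

theorem exists_abs_logGaussian_le (hu : u.HasTemperateGrowth) (hb : 0 < b) (c : ℝ) :
    ∃ C, ∀ x, |logGaussian u b c x| ≤ C := by
  obtain ⟨k, C, hC⟩ := hu.2 0
  simp only [norm_iteratedFDeriv_zero, Real.norm_eq_abs] at hC
  have hC₀ : 0 ≤ C := by simpa using (abs_nonneg _).trans (hC 0)
  refine ⟨C * k.factorial * Real.exp (1 + (|c| + 1) ^ 2 / (4 * b)), fun x => ?_⟩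
  rcases le_or_gt x 0 with hx | hx
  · rw [logGaussian_of_nonpos hx, abs_zero]
    positivity
  rw [logGaussian_of_pos hx, abs_mul, Real.abs_exp]
  generalize Real.log x = s
  have hpow : (1 + |s|) ^ k ≤ k.factorial * Real.exp (1 + |s|) :=
    (div_le_iff₀' (by positivity)).1 (Real.pow_div_factorial_le_exp _ (by positivity) k)
  -- Completing the square in `|s|`.
  have hexponent : 1 + |s| + (c * s - b * s ^ 2) ≤ 1 + (|c| + 1) ^ 2 / (4 * b) := by
    have hcs : c * s ≤ |c| * |s| := (le_abs_self _).trans_eq (abs_mul c s)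
    have hsquare : (|c| + 1) ^ 2 / (4 * b) - (|c| + 1) * |s| + b * |s| ^ 2 =
        b * (|s| - (|c| + 1) / (2 * b)) ^ 2 := by
      field_simp
      ring
    rw [← sq_abs s]
    nlinarith [mul_nonneg hb.le (sq_nonneg (|s| - (|c| + 1) / (2 * b)))]
  calc |u s| * Real.exp (c * s - b * s ^ 2)
      ≤ C * (k.factorial * Real.exp (1 + |s|)) * Real.exp (c * s - b * s ^ 2) := by
        gcongr
        exact (hC s).trans (by gcongr)
    _ = C * k.factorial * Real.exp (1 + |s| + (c * s - b * s ^ 2)) := by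
        rw [Real.exp_add (1 + |s|)]
        ring
    _ ≤ C * k.factorial * Real.exp (1 + (|c| + 1) ^ 2 / (4 * b)) := by gcongr

theorem hasDerivAt_logGaussian_zero (hu : u.HasTemperateGrowth) (hb : 0 < b) (c : ℝ) :
    HasDerivAt (logGaussian u b c) 0 0 := by
  obtain ⟨C, hC⟩ := exists_abs_logGaussian_le hu hb (c - 2)
  have hbigO : logGaussian u b c =O[𝓝 0] fun h : ℝ => h ^ 2 := by
    refine Asymptotics.IsBigO.of_bound C (Eventually.of_forall fun h => ?_)
    have hfactor := pow_mul_logGaussian u b (c - 2) h 2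
    rw [Nat.cast_ofNat, sub_add_cancel] at hfactor
    rw [← hfactor, norm_mul, mul_comm]
    gcongr
    exact hC h
  rw [hasDerivAt_iff_isLittleO_nhds_zero]
  simpa [logGaussian_of_nonpos le_rfl] using
    hbigO.trans_isLittleO (Asymptotics.isLittleO_pow_id one_lt_two)

theorem hasDerivAt_logGaussian_of_pos (hu : Differentiable ℝ u) (b c : ℝ) (hx : 0 < x) :
    HasDerivAt (logGaussian u b c)
      (logGaussian (fun s => deriv u s + (c - 2 * b * s) * u s) b (c - 1) x) x := by
  have hlog := Real.hasDerivAt_log hx.ne'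
  have hcoeff := (hu (Real.log x)).hasDerivAt.comp x hlog
  have hexp := ((hlog.const_mul c).sub ((hlog.pow 2).const_mul b)).exp
  refine ((hcoeff.mul hexp).congr_deriv ?_).congr_of_eventuallyEq ?_
  · have hinv := pow_mul_logGaussian (fun s => deriv u s + (c - 2 * b * s) * u s) b (c - 1) x 1
    rw [pow_one, Nat.cast_one, sub_add_cancel] at hinv
    rw [← mul_right_inj' hx.ne', hinv, logGaussian_of_pos hx]
    simp only [Function.comp_apply, Pi.sub_apply, Pi.pow_apply, Nat.cast_ofNat]
    field_simp
    ring
  · filter_upwards [lt_mem_nhds hx] with y hy using logGaussian_of_pos hy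

theorem hasDerivAt_logGaussian (hu : u.HasTemperateGrowth) (hb : 0 < b) (c x : ℝ) :
    HasDerivAt (logGaussian u b c)
      (logGaussian (fun s => deriv u s + (c - 2 * b * s) * u s) b (c - 1) x) x := by
  rcases lt_trichotomy x 0 with hx | rfl | hx
  · rw [logGaussian_of_nonpos hx.le]
    refine (hasDerivAt_const x (0 : ℝ)).congr_of_eventuallyEq ?_
    filter_upwards [gt_mem_nhds hx] with y hy using logGaussian_of_nonpos hy.le
  · rw [logGaussian_of_nonpos le_rfl]
    exact hasDerivAt_logGaussian_zero hu hb c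
  · exact hasDerivAt_logGaussian_of_pos (hu.1.differentiable (by simp)) b c hx

theorem exists_iteratedDeriv_logGaussian_eq (hu : u.HasTemperateGrowth) (hb : 0 < b) (c : ℝ)
    (n : ℕ) : ∃ v : ℝ → ℝ, v.HasTemperateGrowth ∧
      iteratedDeriv n (logGaussian u b c) = logGaussian v b (c - n) := by
  induction n with
  | zero => exact ⟨u, hu, by simp⟩
  | succ n ih =>
    obtain ⟨v, hv, hn⟩ := ih
    have hv' := hasTemperateGrowth_deriv hv
    refine ⟨fun s => deriv v s + (c - n - 2 * b * s) * v s, by fun_prop, funext fun x => ?_⟩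
    rw [iteratedDeriv_succ, hn, (hasDerivAt_logGaussian hv hb _ x).deriv, sub_sub]
    push_cast
    rfl

/-- `logGaussian` as a Schwartz function. -/
def logGaussianSchwartz (hu : u.HasTemperateGrowth) (hb : 0 < b) (c : ℝ) : 𝓢(ℝ, ℝ) where
  toFun := logGaussian u b c
  smooth' := by
    refine contDiff_of_differentiable_iteratedDeriv fun n _ => ?_
    obtain ⟨v, hv, hn⟩ := exists_iteratedDeriv_logGaussian_eq hu hb c n
    rw [hn]
    exact fun x => (hasDerivAt_logGaussian hv hb _ x).differentiableAt
  decay' k n := by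
    obtain ⟨v, hv, hn⟩ := exists_iteratedDeriv_logGaussian_eq hu hb c n
    obtain ⟨C, hC⟩ := exists_abs_logGaussian_le hv hb (c - n + k)
    refine ⟨C, fun x => ?_⟩
    rw [norm_iteratedFDeriv_eq_norm_iteratedDeriv, hn, ← norm_pow, ← norm_mul,
      pow_mul_logGaussian]
    exact hC x

theorem integrable_logGaussian (hu : u.HasTemperateGrowth) (hb : 0 < b) (c : ℝ) :
    Integrable (logGaussian u b c) :=
  (logGaussianSchwartz hu hb c).integrable

theorem integral_logGaussian (u : ℝ → ℝ) (b c : ℝ) :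
    ∫ x, logGaussian u b c x = ∫ s, u s * Real.exp ((c + 1) * s - b * s ^ 2) := by
  have hexp := integral_image_eq_integral_abs_deriv_smul MeasurableSet.univ
    (fun s _ => (Real.hasDerivAt_exp s).hasDerivWithinAt) Real.exp_injective.injOn
    (logGaussian u b c)
  rw [Set.image_univ, Real.range_exp, setIntegral_univ] at hexp
  rw [← setIntegral_eq_integral_of_forall_compl_eq_zero (s := Set.Ioi 0)
    fun x hx => logGaussian_of_nonpos (not_lt.1 hx), hexp]
  congr 1 with s
  rw [logGaussian_of_pos (Real.exp_pos s), Real.log_exp, abs_of_pos (Real.exp_pos s), smul_eq_mul,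
    mul_left_comm, ← Real.exp_add]
  ring_nf

-- The reflection `s ↦ (k + 1/2) / b - s` preserves the Gaussian factor of the `k`-th moment and
-- changes the sign of the cosine.
theorem integral_pow_mul_logGaussian_cos (hb : 0 < b) (k : ℕ) :
    ∫ x, x ^ k * logGaussian (fun s => Real.cos (2 * Real.pi * b * s)) b (-1 / 2) x = 0 := by
  simp_rw [pow_mul_logGaussian]
  rw [integral_logGaussian, ← self_eq_neg, ← integral_neg,
    ← integral_sub_left_eq_self _ volume ((k + 1 / 2) / b)]
  congr 1 with s
  have hphase : 2 * Real.pi * b * ((k + 1 / 2) / b - s) =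
      k * (2 * Real.pi) + Real.pi - 2 * Real.pi * b * s := by
    field_simp
  have hcos : Real.cos (2 * Real.pi * b * ((k + 1 / 2) / b - s)) =
      -Real.cos (2 * Real.pi * b * s) := by
    rw [hphase, add_sub_assoc, add_comm, Real.cos_add_nat_mul_two_pi, Real.cos_pi_sub]
  rw [hcos, neg_mul]
  congr 3
  field_simp
  ring

end LogGaussian

section HalfLineMoments

-- At `s = log x` the factor `σ(-s)` is `1 / (1 + x)`.
theorem one_add_mul_logGaussian_sigmoid (u : ℝ → ℝ) (b c x : ℝ) :
    (1 + x) * logGaussian (fun s => u s * Real.sigmoid (-s)) b c x = logGaussian u b c x := by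
  rcases le_or_gt x 0 with hx | hx
  · rw [logGaussian_of_nonpos hx, logGaussian_of_nonpos hx, mul_zero]
  · rw [logGaussian_of_pos hx, logGaussian_of_pos hx, Real.sigmoid_def, neg_neg, Real.exp_log hx]
    field_simp

theorem integral_one_add_pow_mul_eq_zero {f : ℝ → ℝ}
    (hint : ∀ k : ℕ, Integrable fun x => x ^ k * f x) (hf : ∀ k : ℕ, ∫ x, x ^ k * f x = 0) (k : ℕ) :
    ∫ x, (1 + x) ^ k * f x = 0 := by
  have hexpand (x : ℝ) : (1 + x) ^ k * f x =
      ∑ i ∈ Finset.range (k + 1), k.choose i * (x ^ i * f x) := by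
    rw [add_comm, add_pow, Finset.sum_mul]
    exact Finset.sum_congr rfl fun i _ => by ring
  simp_rw [hexpand]
  rw [integral_finsetSum _ fun i _ => (hint i).const_mul _]
  simp only [integral_const_mul, hf, mul_zero, Finset.sum_const_zero]

theorem integrable_exp_mul_mul_sigmoid_neg {a : ℝ} (ha₀ : 0 < a) (ha₁ : a < 1) :
    Integrable fun s => Real.exp (a * s) * Real.sigmoid (-s) := by
  have hmeas (t : Set ℝ) : AEStronglyMeasurable
      (fun s => Real.exp (a * s) * Real.sigmoid (-s)) (volume.restrict t) :=
    Continuous.aestronglyMeasurable (by fun_prop)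
  rw [← integrableOn_univ, ← Set.Iic_union_Ioi (a := (0 : ℝ))]
  refine .union ((integrableOn_exp_mul_Iic ha₀ 0).mono' (hmeas _) (ae_of_all _ fun s => ?_))
    ((integrableOn_exp_mul_Ioi (sub_neg.2 ha₁) 0).mono' (hmeas _) (ae_of_all _ fun s => ?_)) <;>
    rw [Real.norm_of_nonneg (mul_nonneg (Real.exp_nonneg _) (Real.sigmoid_nonneg _))]
  · exact mul_le_of_le_one_right (Real.exp_nonneg _) (Real.sigmoid_le_one _)
  · rw [sub_mul, one_mul, sub_eq_add_neg, Real.exp_add, ← Real.sigmoid_mul_rexp_neg]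
    gcongr
    exact mul_le_of_le_one_left (Real.exp_nonneg _) (Real.sigmoid_le_one _)

theorem integral_exp_mul_mul_sigmoid_neg_pos {a : ℝ} (ha₀ : 0 < a) (ha₁ : a < 1) :
    0 < ∫ s, Real.exp (a * s) * Real.sigmoid (-s) :=
  integral_pos_of_integrable_nonneg_nonzero (x := 0) (by fun_prop)
    (integrable_exp_mul_mul_sigmoid_neg ha₀ ha₁)
    (fun s => mul_nonneg (Real.exp_nonneg _) (Real.sigmoid_nonneg _))
    (mul_ne_zero (Real.exp_ne_zero _) (Real.sigmoid_pos _).ne')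

theorem tendsto_integral_logGaussian_cos_mul_sigmoid :
    Tendsto (fun b => ∫ x, logGaussian
      (fun s => Real.cos (2 * Real.pi * b * s) * Real.sigmoid (-s)) b (-1 / 2) x)
      (𝓝[>] 0) (𝓝 (∫ s, Real.exp (1 / 2 * s) * Real.sigmoid (-s))) := by
  simp_rw [integral_logGaussian]
  refine tendsto_integral_filter_of_dominated_convergence _
    (.of_forall fun b => Continuous.aestronglyMeasurable (by fun_prop)) ?_
    (integrable_exp_mul_mul_sigmoid_neg one_half_pos one_half_lt_one) (ae_of_all _ fun s => ?_)
  · filter_upwards [self_mem_nhdsWithin] with b (hb : 0 < b)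
    refine ae_of_all _ fun s => ?_
    rw [norm_mul, norm_mul, Real.norm_of_nonneg (Real.sigmoid_nonneg _), Real.norm_eq_abs,
      Real.norm_of_nonneg (Real.exp_nonneg _), mul_comm (Real.exp _)]
    refine mul_le_mul
      (mul_le_of_le_one_left (Real.sigmoid_nonneg _) (Real.abs_cos_le_one _))
      (Real.exp_le_exp.2 ?_) (Real.exp_nonneg _) (Real.sigmoid_nonneg _)
    nlinarith [mul_nonneg hb.le (sq_nonneg s)]
  · have hcont : Continuous fun b => Real.cos (2 * Real.pi * b * s) * Real.sigmoid (-s) *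
        Real.exp ((-1 / 2 + 1) * s - b * s ^ 2) := by fun_prop
    refine (hcont.tendsto' 0 _ ?_).mono_left nhdsWithin_le_nhds
    norm_num [mul_comm]

theorem exists_schwartz_halfLine_one_add_moments :
    ∃ f : 𝓢(ℝ, ℝ), (∀ x ≤ 0, f x = 0) ∧
      ∀ k : ℕ, ∫ x, (1 + x) ^ k * f x = if k = 0 then 1 else 0 := by
  obtain ⟨b, hI, hb⟩ := ((tendsto_integral_logGaussian_cos_mul_sigmoid.eventually_ne
    (integral_exp_mul_mul_sigmoid_neg_pos one_half_pos one_half_lt_one).ne').and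
    self_mem_nhdsWithin).exists
  have hcos : (fun s => Real.cos (2 * Real.pi * b * s)).HasTemperateGrowth :=
    hasTemperateGrowth_cos.comp (by fun_prop)
  have hsigmoid : (fun s => Real.sigmoid (-s)).HasTemperateGrowth :=
    hasTemperateGrowth_sigmoid.comp (by fun_prop)
  set I := ∫ x, logGaussian
    (fun s => Real.cos (2 * Real.pi * b * s) * Real.sigmoid (-s)) b (-1 / 2) x with hI_def
  refine ⟨I⁻¹ • logGaussianSchwartz (hcos.mul hsigmoid) hb (-1 / 2), fun x hx => ?_, fun k => ?_⟩
  · exact (congrArg (I⁻¹ * ·) (logGaussian_of_nonpos hx)).trans (mul_zero _)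
  change ∫ x, (1 + x) ^ k * (I⁻¹ * logGaussian
    (fun s => Real.cos (2 * Real.pi * b * s) * Real.sigmoid (-s)) b (-1 / 2) x) = _
  simp_rw [mul_left_comm _ I⁻¹, integral_const_mul]
  cases k with
  | zero => simp only [pow_zero, one_mul, ← hI_def, inv_mul_cancel₀ hI, if_pos]
  | succ k =>
    simp_rw [pow_succ, mul_assoc ((1 + _ : ℝ) ^ k), one_add_mul_logGaussian_sigmoid]
    rw [integral_one_add_pow_mul_eq_zero (fun j => ?_) (integral_pow_mul_logGaussian_cos hb),
      mul_zero, if_neg k.succ_ne_zero]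
    simp_rw [pow_mul_logGaussian]
    exact integrable_logGaussian hcos hb _

theorem exists_schwartz_halfLine_dirac_moments :
    ∃ g : 𝓢(ℝ, ℝ), (∀ x, -1 < x → g x = 0) ∧
      ∀ k : ℕ, ∫ x, x ^ k * g x = if k = 0 then 1 else 0 := by
  obtain ⟨f, hf, hmoments⟩ := exists_schwartz_halfLine_one_add_moments
  let g := SchwartzMap.compSubConstCLM ℝ (-1)
    (SchwartzMap.compCLMOfContinuousLinearEquiv ℝ (ContinuousLinearEquiv.neg ℝ) f)
  have hg (x : ℝ) : g (-1 - x) = f x := by simp [g]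
  refine ⟨g, fun x hx => ?_, fun k => ?_⟩
  · rw [← sub_sub_cancel (-1) x, hg]
    exact hf _ (by linarith)
  · rw [← integral_sub_left_eq_self _ volume (-1)]
    simp_rw [hg, ← neg_add', neg_pow (1 + _ : ℝ) k, mul_assoc, integral_const_mul, hmoments]
    split_ifs with hk <;> simp [hk]

end HalfLineMoments

section TensorProduct

variable {ι : Type*} [Fintype ι] {E : ι → Type*} [∀ i, NormedAddCommGroup (E i)]

theorem norm_le_prod_one_add_norm (x : ∀ i, E i) : ‖x‖ ≤ ∏ i, (1 + ‖x i‖) := by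
  classical
  refine (pi_norm_le_iff_of_nonneg (by positivity)).2 fun i => ?_
  rw [← Finset.mul_prod_erase _ _ (Finset.mem_univ i)]
  exact (le_add_of_nonneg_left zero_le_one).trans (le_mul_of_one_le_right (by positivity)
    (Finset.one_le_prod fun j _ => le_add_of_nonneg_right (norm_nonneg (x j))))

variable [∀ i, NormedSpace ℝ (E i)]

theorem norm_iteratedFDeriv_comp_apply_le {F : Type*} [NormedAddCommGroup F] [NormedSpace ℝ F]
    {i : ι} {f : E i → F} (hf : ContDiff ℝ (⊤ : ℕ∞) f) (n : ℕ) (x : ∀ i, E i) :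
    ‖iteratedFDeriv ℝ n (fun y : ∀ i, E i => f (y i)) x‖ ≤ ‖iteratedFDeriv ℝ n f (x i)‖ := by
  have hcomp := (ContinuousLinearMap.proj (R := ℝ) (φ := E) i).iteratedFDeriv_comp_right hf x
    (mod_cast le_top : (n : WithTop ℕ∞) ≤ _)
  have hproj : ‖ContinuousLinearMap.proj (R := ℝ) (φ := E) i‖ ≤ 1 :=
    ContinuousLinearMap.opNorm_le_bound _ zero_le_one fun y => by
      simpa using norm_le_pi_norm y i
  refine (congrArg norm hcomp).trans_le
    ((ContinuousMultilinearMap.norm_compContinuousLinearMap_le _ _).trans ?_)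
  exact mul_le_of_le_one_right (norm_nonneg _)
    (Finset.prod_le_one (fun _ _ => norm_nonneg _) fun _ _ => hproj)

theorem exists_norm_pow_mul_iteratedFDeriv_prod_le (f : ∀ i, 𝓢(E i, ℝ)) (k n : ℕ) :
    ∃ C, ∀ x : ∀ i, E i, ‖x‖ ^ k * ‖iteratedFDeriv ℝ n (fun x => ∏ i, f i (x i)) x‖ ≤ C := by
  classical
  have hbound (i : ι) (l : ℕ) :
      ∃ C, ∀ y, (1 + ‖y‖) ^ k * ‖iteratedFDeriv ℝ l (f i) y‖ ≤ C :=
    ⟨_, SchwartzMap.one_add_le_sup_seminorm_apply (𝕜 := ℝ) (m := (k, l)) le_rfl le_rfl (f i)⟩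
  choose C hC using hbound
  refine ⟨∑ p ∈ (Finset.univ : Finset ι).sym n, ((p : Multiset ι).countPerms : ℝ) *
    ∏ i, C i ((p : Multiset ι).count i), fun x => ?_⟩
  have hsmooth : ∀ i ∈ Finset.univ, ContDiff ℝ n fun y : ∀ i, E i => f i (y i) :=
    fun i _ => ((f i).smooth n).comp (contDiff_pi.1 contDiff_id i)
  have hpow : ‖x‖ ^ k ≤ ∏ i, (1 + ‖x i‖) ^ k := by
    rw [Finset.prod_pow]
    gcongr
    exact norm_le_prod_one_add_norm x
  refine (mul_le_mul hpow (norm_iteratedFDeriv_prod_le hsmooth le_rfl) (norm_nonneg _)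
    (by positivity)).trans ?_
  rw [Finset.mul_sum]
  refine Finset.sum_le_sum fun p _ => ?_
  rw [mul_left_comm, ← Finset.prod_mul_distrib]
  gcongr with i
  exact (mul_le_mul_of_nonneg_left (norm_iteratedFDeriv_comp_apply_le ((f i).smooth ⊤) _ x)
    (by positivity)).trans (hC i _ _)

/-- The tensor product `x ↦ ∏ i, f i (x i)` of finitely many real Schwartz functions. -/
def schwartzTensor (f : ∀ i, 𝓢(E i, ℝ)) : 𝓢(∀ i, E i, ℝ) where
  toFun x := ∏ i, f i (x i)
  smooth' := contDiff_prod fun i _ => ((f i).smooth ⊤).comp (contDiff_pi.1 contDiff_id i)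
  decay' k n := exists_norm_pow_mul_iteratedFDeriv_prod_le f k n

theorem schwartzMoment_schwartzTensor (f : ι → 𝓢(ℝ, ℝ)) (α : ι → ℕ) :
    schwartzMoment α (schwartzTensor f) = ∏ i, ∫ x, x ^ α i * f i x := by
  rw [← integral_fintype_prod_volume_eq_prod fun i x => x ^ α i * f i x]
  simp_rw [Finset.prod_mul_distrib]
  rfl

theorem exists_mem_negOrthantSubmodule_hasDiracMoments (ι : Type*) [Fintype ι] :
    ∃ f ∈ negOrthantSubmodule ι, HasDiracMoments f := by
  classical
  obtain ⟨g, hg, hmoments⟩ := exists_schwartz_halfLine_dirac_moments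
  refine ⟨schwartzTensor fun _ => g, fun x hx => ?_, fun α => ?_⟩
  · obtain ⟨i, hi⟩ := not_forall.1 hx
    exact Finset.prod_eq_zero (Finset.mem_univ i) (hg _ (not_le.1 hi))
  · simp_rw [schwartzMoment_schwartzTensor, hmoments, Finset.prod_ite_zero, Finset.prod_const_one,
      funext_iff, Finset.mem_univ, true_imp_iff]
    rfl

end TensorProduct

section Calderon

theorem eq_translateAverage_schwartzConv {E : Type*} [NormedAddCommGroup E] [NormedSpace ℝ E]
    [MeasureSpace E] [BorelSpace E] [SecondCountableTopology E] [FiniteDimensional ℝ E]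
    [(volume : Measure E).IsAddHaarMeasure] {p q η κ : 𝓢(E, ℝ)}
    (hκ : ∀ x, κ x = ∫ y, (∫ z, p (y - x - z) * q z) * η y) :
    κ = translateAverage volume (.id ℝ E) (schwartzConv p q) η := by
  ext x
  rw [hκ, translateAverage_apply, ← integral_add_right_eq_self _ x]
  simp only [add_sub_cancel_right, schwartzConv_apply_swap, smul_eq_mul,
    ContinuousLinearMap.id_apply, add_comm x]

theorem add_sum_schwartzConv_dilate {ι : Type*} [Fintype ι] {a : ι → ℝ} {φ ψ T : 𝓢(ι → ℝ, ℝ)}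
    (htelescope : schwartzConv ψ φ = T - dilate a (-1) T) (N : ℕ) :
    T + ∑ j ∈ Finset.range N, schwartzConv (dilate a (j + 1 : ℕ) ψ) (dilate a (j + 1 : ℕ) φ) =
      dilate a N T := by
  have hterm (j : ℕ) : schwartzConv (dilate a (j + 1 : ℕ) ψ) (dilate a (j + 1 : ℕ) φ) =
      dilate a (j + 1 : ℕ) T - dilate a j T := by
    rw [← dilate_schwartzConv, htelescope, map_sub, dilate_dilate, Nat.cast_succ,
      neg_add_cancel_comm_assoc]
  simp_rw [hterm]
  rw [Finset.sum_range_sub fun j : ℕ => dilate a j T, Nat.cast_zero, dilate_zero, add_sub_cancel]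

variable {m : ℕ} {a : Fin m → ℝ} {φ₀ φ ψ₀ ψ η : 𝓢(Fin m → ℝ, ℝ)} {c : ℕ → 𝓢(Fin m → ℝ, ℝ)}

theorem anisoDil_zero (a : Fin m → ℝ) (θ₀ θ : (Fin m → ℝ) → ℝ) : anisoDil a θ₀ θ 0 = θ₀ :=
  funext fun _ => if_pos rfl

theorem anisoDil_succ (a : Fin m → ℝ) (θ₀ : (Fin m → ℝ) → ℝ) (θ : 𝓢(Fin m → ℝ, ℝ)) (j : ℕ) :
    anisoDil a θ₀ ⇑θ (j + 1) = ⇑(dilate a (j + 1 : ℕ) θ) := by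
  ext x
  rw [anisoDil, if_neg j.succ_ne_zero, dilate_apply, funext (anisoScale_apply a _ x)]

theorem sum_calderon_eq_translateAverage
    (hc : ∀ j x, c j x =
      ∫ y, (∫ z, anisoDil a ⇑ψ₀ ⇑ψ j ((y - x) - z) * anisoDil a ⇑φ₀ ⇑φ j z) * η y)
    (htelescope : schwartzConv ψ φ = schwartzConv ψ₀ φ₀ - dilate a (-1) (schwartzConv ψ₀ φ₀))
    (N : ℕ) : ∑ j ∈ Finset.range (N + 1), c j =
      translateAverage volume (.id ℝ (Fin m → ℝ)) (dilate a N (schwartzConv ψ₀ φ₀)) η := by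
  have hzero : c 0 = translateAverage volume (.id ℝ _) (schwartzConv ψ₀ φ₀) η :=
    eq_translateAverage_schwartzConv fun x => by rw [hc, anisoDil_zero, anisoDil_zero]
  have hsucc (j : ℕ) : c (j + 1) = translateAverage volume (.id ℝ _)
      (schwartzConv (dilate a (j + 1 : ℕ) ψ) (dilate a (j + 1 : ℕ) φ)) η :=
    eq_translateAverage_schwartzConv fun x => by rw [hc, anisoDil_succ, anisoDil_succ]
  rw [← add_sum_schwartzConv_dilate htelescope, map_add, map_sum, LinearMap.add_apply,
    LinearMap.sum_apply, Finset.sum_range_succ', add_comm, hzero]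
  simp_rw [hsucc]

theorem tendsto_sum_calderon (ha : ∀ i, 0 < a i)
    (hc : ∀ j x, c j x =
      ∫ y, (∫ z, anisoDil a ⇑ψ₀ ⇑ψ j ((y - x) - z) * anisoDil a ⇑φ₀ ⇑φ j z) * η y)
    (htelescope : schwartzConv ψ φ = schwartzConv ψ₀ φ₀ - dilate a (-1) (schwartzConv ψ₀ φ₀))
    (hone : ∫ x, schwartzConv ψ₀ φ₀ x = 1) :
    Tendsto (fun N => ∑ j ∈ Finset.range N, c j) atTop (𝓝 η) := by
  rw [← tendsto_add_atTop_iff_nat 1]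
  simp_rw [sum_calderon_eq_translateAverage hc htelescope]
  exact (tendsto_translateAverage_dilate ha hone η).comp tendsto_natCast_atTop_atTop

end Calderon

theorem exists_calderon_reproducing_halfspace_general {m : ℕ} (a : Fin m → ℝ)
    (ha : ∀ i, 0 < a i) :
    ∃ φ₀ φ ψ₀ ψ : 𝓢(Fin m → ℝ, ℝ),
      tsupport ⇑φ₀ ⊆ {x | ∀ i, x i < 0} ∧ tsupport ⇑φ ⊆ {x | ∀ i, x i < 0} ∧
      tsupport ⇑ψ₀ ⊆ {x | ∀ i, x i < 0} ∧ tsupport ⇑ψ ⊆ {x | ∀ i, x i < 0} ∧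
      VanishingMoments ⇑φ ∧ VanishingMoments ⇑ψ ∧
      ∀ (η : 𝓢(Fin m → ℝ, ℝ)) (c : ℕ → 𝓢(Fin m → ℝ, ℝ)),
        (∀ j x, c j x =
          ∫ y, (∫ z, anisoDil a ⇑ψ₀ ⇑ψ j ((y - x) - z) * anisoDil a ⇑φ₀ ⇑φ j z) * η y) →
        Tendsto (fun N => ∑ j ∈ Finset.range N, c j) atTop (𝓝 η) := by
  obtain ⟨f, hf, hfm⟩ := exists_mem_negOrthantSubmodule_hasDiracMoments (Fin m)
  let g := dilate a (-1) f
  have hg : g ∈ negOrthantSubmodule (Fin m) :=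
    dilate_mem_negOrthantSubmodule (fun i => (ha i).le) neg_one_lt_zero.le hf
  have hgm : HasDiracMoments g := hfm.dilate a (-1)
  refine ⟨f, f - g, smoothstepCofactor f, smoothstepDivDiff f g,
    tsupport_subset_of_mem_negOrthantSubmodule hf,
    tsupport_subset_of_mem_negOrthantSubmodule (sub_mem hf hg),
    tsupport_subset_of_mem_negOrthantSubmodule (smoothstepCofactor_mem_negOrthantSubmodule hf),
    tsupport_subset_of_mem_negOrthantSubmodule (smoothstepDivDiff_mem_negOrthantSubmodule hf hg),
    hfm.schwartzMoment_sub_eq_zero hgm, hfm.schwartzMoment_smoothstepDivDiff hgm,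
    fun η c hc => tendsto_sum_calderon ha hc ?_ ?_⟩
  · rw [schwartzConv_smoothstepDivDiff_sub, dilate_schwartzConv, dilate_smoothstepCofactor]
  · exact (hfm.smoothstepCofactor.schwartzConv hfm).integral_eq_one

/-- For any anisotropy `a ∈ [1,∞)ⁿ` there exist `φ₀, φ, ψ₀, ψ ∈ 𝓢(ℝⁿ)`
supported in the open half-space `{xₙ < 0}`, with `φ` and `ψ` having vanishing moments of all
orders, such that the Calderón reproducing formula `u = Σ_j ψ_j * (φ_j * u)` holds for every
tempered distribution `u`, the series converging in the weak* sense; here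
`⟨ψ_j * (φ_j * u), η⟩ = ⟨u, (ψ_j*φ_j)̌ * η⟩`. -/
theorem exists_calderon_reproducing_halfspace (n : ℕ) (a : Fin (n+1) → ℝ)
    (ha : ∀ i, 1 ≤ a i) :
    ∃ φ₀ φ ψ₀ ψ : SchwartzMap (Fin (n+1) → ℝ) ℝ,
      tsupport ⇑φ₀ ⊆ {x : Fin (n+1) → ℝ | x (Fin.last n) < 0} ∧
      tsupport ⇑φ ⊆ {x : Fin (n+1) → ℝ | x (Fin.last n) < 0} ∧
      tsupport ⇑ψ₀ ⊆ {x : Fin (n+1) → ℝ | x (Fin.last n) < 0} ∧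
      tsupport ⇑ψ ⊆ {x : Fin (n+1) → ℝ | x (Fin.last n) < 0} ∧
      VanishingMoments ⇑φ ∧ VanishingMoments ⇑ψ ∧
      ∀ (u : SchwartzMap (Fin (n+1) → ℝ) ℝ →L[ℝ] ℝ)
        (η : SchwartzMap (Fin (n+1) → ℝ) ℝ)
        (c : ℕ → SchwartzMap (Fin (n+1) → ℝ) ℝ),
        (∀ (j : ℕ) (x : Fin (n+1) → ℝ),
          c j x = ∫ y : Fin (n+1) → ℝ,
            (∫ z : Fin (n+1) → ℝ,
              anisoDil a ⇑ψ₀ ⇑ψ j ((y - x) - z) * anisoDil a ⇑φ₀ ⇑φ j z) * η y) →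
        Tendsto (fun N => ∑ j ∈ Finset.range N, u (c j)) atTop (nhds (u η)) := by
  obtain ⟨φ₀, φ, ψ₀, ψ, hφ₀, hφ, hψ₀, hψ, hφm, hψm, htendsto⟩ :=
    exists_calderon_reproducing_halfspace_general a fun i => one_pos.trans_le (ha i)
  exact ⟨φ₀, φ, ψ₀, ψ, fun x hx => hφ₀ hx _, fun x hx => hφ hx _, fun x hx => hψ₀ hx _,
    fun x hx => hψ hx _, hφm, hψm, fun u η c hc => by
      simpa only [map_sum, Function.comp_def] using (u.continuous.tendsto η).comp (htendsto η c hc)⟩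

end
end

section
/- Let a = (a₁,…,aₙ) ∈ [1,∞)ⁿ and let φ₀, φ, ψ₀, ψ ∈ 𝓢(ℝⁿ) be supported in {x ∈ ℝⁿ : xₙ < 0}, with φ and ψ having vanishing moments of all orders. Then for every f ∈ 𝓢'(ℝⁿ) and every η ∈ 𝓢(ℝⁿ) the series Σ_{j=0}^∞ ⟨e₊(φ_j * f), ψ̌_j * η⟩ converges absolutely, and η ↦ Σ_{j=0}^∞ ⟨e₊(φ_j * f), ψ̌_j * η⟩ defines a tempered distribution E_u(f) ∈ 𝓢'(ℝⁿ); that is, the series E_u(f) = Σ_{j=0}^∞ ψ_j * e₊(φ_j * f) converges in the weak* topology of 𝓢'(ℝⁿ). -/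
open MeasureTheory Filter Topology

noncomputable section

/-!
The function `φ_j * f` grows at most geometrically in `j` and polynomially in `x`, with a rate `R`
and an exponent fixed by the order of `f`. On the other side, `(ψ̌_j * η)(x)` is the integral of
`ψ(z) η(x + 2^{-ja}z)`, and subtracting from `η` its Taylor polynomial of degree `< N` at `x`, which
`ψ` annihilates, leaves `O(2^{-jδN})` with `δ ≤ min aᵢ`, uniformly against any power of `1 + ‖x‖`.
Taking `N` with `R 2^{-δN} < 1`, the pairings are dominated by a geometric series times a single
Schwartz seminorm of `η`.
-/

open scoped SchwartzMap

theorem one_add_norm_add_le_mul {V : Type*} [SeminormedAddCommGroup V] (x y : V) :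
    1 + ‖x + y‖ ≤ (1 + ‖x‖) * (1 + ‖y‖) := by
  nlinarith [norm_add_le x y, mul_nonneg (norm_nonneg x) (norm_nonneg y)]

section SchwartzNorm

variable {V : Type*} [NormedAddCommGroup V] [NormedSpace ℝ V]

/-- The increasing family of Schwartz norms: `schwartzNorm k l` is the largest of the seminorms
`SchwartzMap.seminorm ℝ k' l'` with `k' ≤ k` and `l' ≤ l`. It is equivalent to the weighted
`C^l` norm with weight `(1 + ‖x‖) ^ k`. -/
def schwartzNorm (k l : ℕ) : Seminorm ℝ 𝓢(V, ℝ) :=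
  (Finset.Iic (k, l)).sup (schwartzSeminormFamily ℝ V ℝ)

theorem schwartzNorm_mono {k l k' l' : ℕ} (hk : k ≤ k') (hl : l ≤ l') :
    schwartzNorm (V := V) k l ≤ schwartzNorm k' l' :=
  Finset.sup_mono (Finset.Iic_subset_Iic.2 (Prod.mk_le_mk.2 ⟨hk, hl⟩))

theorem continuous_schwartzNorm (k l : ℕ) : Continuous (schwartzNorm (V := V) k l) :=
  Seminorm.continuous_finsetSup fun i _ => (schwartz_withSeminorms ℝ V ℝ).continuous_seminorm i

theorem one_add_norm_pow_mul_norm_iteratedFDeriv_le (k : ℕ) {l l' : ℕ} (hl : l' ≤ l)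
    (g : 𝓢(V, ℝ)) (x : V) :
    (1 + ‖x‖) ^ k * ‖iteratedFDeriv ℝ l' g x‖ ≤ 2 ^ k * schwartzNorm k l g :=
  SchwartzMap.one_add_le_sup_seminorm_apply (𝕜 := ℝ) (m := (k, l)) le_rfl hl g x

theorem schwartzNorm_le_of_forall {k l : ℕ} {g : 𝓢(V, ℝ)} {C : ℝ} (hC : 0 ≤ C)
    (h : ∀ l' ≤ l, ∀ x, (1 + ‖x‖) ^ k * ‖iteratedFDeriv ℝ l' g x‖ ≤ C) :
    schwartzNorm k l g ≤ C := by
  refine Seminorm.finset_sup_apply_le hC fun i hi => ?_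
  obtain ⟨hk, hl⟩ := Prod.mk_le_mk.1 (Finset.mem_Iic.1 hi)
  refine SchwartzMap.seminorm_le_bound ℝ i.1 i.2 g hC fun x => ?_
  refine (mul_le_mul_of_nonneg_right ?_ (norm_nonneg _)).trans (h i.2 hl x)
  calc ‖x‖ ^ i.1 ≤ (1 + ‖x‖) ^ i.1 := by gcongr; linarith
    _ ≤ (1 + ‖x‖) ^ k := pow_le_pow_right₀ (by linarith [norm_nonneg x]) hk

theorem exists_abs_apply_le_schwartzNorm (f : 𝓢(V, ℝ) →L[ℝ] ℝ) :
    ∃ (k l : ℕ) (C : ℝ), 0 ≤ C ∧ ∀ g, |f g| ≤ C * schwartzNorm k l g := by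
  obtain ⟨s, C, -, hC⟩ := Seminorm.bound_of_continuous (schwartz_withSeminorms ℝ V ℝ)
    ((normSeminorm ℝ ℝ).comp f.toLinearMap) f.continuous.norm
  have hs : s.sup (schwartzSeminormFamily ℝ V ℝ) ≤ schwartzNorm (s.sup Prod.fst) (s.sup Prod.snd) :=
    Finset.sup_mono fun i hi =>
      Finset.mem_Iic.2 (Prod.mk_le_mk.2 ⟨Finset.le_sup (f := Prod.fst) hi,
        Finset.le_sup (f := Prod.snd) hi⟩)
  exact ⟨_, _, C, C.2, fun g =>
    (hC g).trans (mul_le_mul_of_nonneg_left (hs g) C.2)⟩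

theorem schwartzNorm_comp_le (A : V ≃L[ℝ] V) (hA : ∀ x, ‖x‖ ≤ ‖A x‖) {R : ℝ} (hR : 1 ≤ R)
    (hAR : ‖(A : V →L[ℝ] V)‖ ≤ R) (k l : ℕ) (g : 𝓢(V, ℝ)) :
    schwartzNorm k l (SchwartzMap.compCLMOfContinuousLinearEquiv ℝ A g) ≤
      2 ^ k * R ^ l * schwartzNorm k l g := by
  refine schwartzNorm_le_of_forall (by positivity) fun l' hl x => ?_
  have hderiv : ‖iteratedFDeriv ℝ l' (g ∘ A) x‖ ≤ ‖iteratedFDeriv ℝ l' g (A x)‖ * R ^ l := by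
    have hcomp := (A : V →L[ℝ] V).iteratedFDeriv_comp_right (g.smooth l') x (i := l') le_rfl
    rw [ContinuousLinearEquiv.coe_coe] at hcomp
    rw [hcomp]
    refine (ContinuousMultilinearMap.norm_compContinuousLinearMap_le _ _).trans ?_
    rw [Finset.prod_const, Finset.card_univ, Fintype.card_fin]
    gcongr
    exact (pow_le_pow_left₀ (norm_nonneg _) hAR l').trans (pow_le_pow_right₀ hR hl)
  calc (1 + ‖x‖) ^ k * ‖iteratedFDeriv ℝ l' (g ∘ A) x‖
      ≤ (1 + ‖A x‖) ^ k * (‖iteratedFDeriv ℝ l' g (A x)‖ * R ^ l) := by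
        gcongr
        exact hA x
    _ = R ^ l * ((1 + ‖A x‖) ^ k * ‖iteratedFDeriv ℝ l' g (A x)‖) := by ring
    _ ≤ R ^ l * (2 ^ k * schwartzNorm k l g) :=
        mul_le_mul_of_nonneg_left (one_add_norm_pow_mul_norm_iteratedFDeriv_le k hl g _)
          (by positivity)
    _ = 2 ^ k * R ^ l * schwartzNorm k l g := by ring

end SchwartzNorm

section Translation

variable {V : Type*} [NormedAddCommGroup V] [NormedSpace ℝ V]

theorem schwartzNorm_translate_le (k l : ℕ) (g : 𝓢(V, ℝ)) (x : V) :
    schwartzNorm k l (g.compSubConstCLM ℝ x) ≤ 2 ^ k * (1 + ‖x‖) ^ k * schwartzNorm k l g := by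
  refine schwartzNorm_le_of_forall (by positivity) fun l' hl y => ?_
  have hy : 1 + ‖y‖ ≤ (1 + ‖x‖) * (1 + ‖y - x‖) := by
    simpa using one_add_norm_add_le_mul x (y - x)
  calc (1 + ‖y‖) ^ k * ‖iteratedFDeriv ℝ l' (fun z => g (z - x)) y‖
      ≤ ((1 + ‖x‖) * (1 + ‖y - x‖)) ^ k * ‖iteratedFDeriv ℝ l' g (y - x)‖ := by
        rw [iteratedFDeriv_comp_sub]
        gcongr
    _ = (1 + ‖x‖) ^ k * ((1 + ‖y - x‖) ^ k * ‖iteratedFDeriv ℝ l' g (y - x)‖) := by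
        rw [mul_pow, mul_assoc]
    _ ≤ (1 + ‖x‖) ^ k * (2 ^ k * schwartzNorm k l g) :=
        mul_le_mul_of_nonneg_left (one_add_norm_pow_mul_norm_iteratedFDeriv_le k hl g _)
          (by positivity)
    _ = 2 ^ k * (1 + ‖x‖) ^ k * schwartzNorm k l g := by ring

theorem one_add_norm_pow_mul_norm_iteratedFDeriv_sub_le (k : ℕ) {l l' : ℕ} (hl : l' < l)
    (g : 𝓢(V, ℝ)) {h : V} (hh : ‖h‖ ≤ 1) (y : V) :
    (1 + ‖y‖) ^ k * ‖iteratedFDeriv ℝ l' g (y - h) - iteratedFDeriv ℝ l' g y‖ ≤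
      4 ^ k * schwartzNorm k l g * ‖h‖ := by
  have hdiff : Differentiable ℝ (iteratedFDeriv ℝ l' g) :=
    (g.smooth (l' + 1)).differentiable_iteratedFDeriv (by exact_mod_cast l'.lt_succ_self)
  have hbound : ∀ z ∈ Metric.closedBall y ‖h‖, ‖fderiv ℝ (iteratedFDeriv ℝ l' g) z‖ ≤
      4 ^ k * schwartzNorm k l g / (1 + ‖y‖) ^ k := fun z hz => by
    have hyz : 1 + ‖y‖ ≤ 2 * (1 + ‖z‖) := by
      have : ‖y‖ - ‖z‖ ≤ 1 := (norm_sub_norm_le y z).trans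
        (((dist_eq_norm y z).symm.trans (dist_comm y z)).trans_le (hz.trans hh))
      linarith [norm_nonneg z]
    rw [norm_fderiv_iteratedFDeriv, le_div_iff₀' (by positivity)]
    calc (1 + ‖y‖) ^ k * ‖iteratedFDeriv ℝ (l' + 1) g z‖
        ≤ (2 * (1 + ‖z‖)) ^ k * ‖iteratedFDeriv ℝ (l' + 1) g z‖ := by gcongr
      _ = 2 ^ k * ((1 + ‖z‖) ^ k * ‖iteratedFDeriv ℝ (l' + 1) g z‖) := by rw [mul_pow, mul_assoc]
      _ ≤ 2 ^ k * (2 ^ k * schwartzNorm k l g) :=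
          mul_le_mul_of_nonneg_left (one_add_norm_pow_mul_norm_iteratedFDeriv_le k hl g z)
            (by positivity)
      _ = 4 ^ k * schwartzNorm k l g := by rw [← mul_assoc, ← mul_pow]; norm_num
  have hmvt := (convex_closedBall y ‖h‖).norm_image_sub_le_of_norm_fderiv_le (𝕜 := ℝ)
    (fun z _ => hdiff z) hbound (x := y) (y := y - h) (by simp) (by simp)
  rwa [sub_sub_cancel_left, norm_neg, div_mul_eq_mul_div, le_div_iff₀' (by positivity)] at hmvt

theorem schwartzNorm_translate_sub_le (k l : ℕ) (g : 𝓢(V, ℝ)) {h : V} (hh : ‖h‖ ≤ 1) :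
    schwartzNorm k l (g.compSubConstCLM ℝ h - g) ≤ 4 ^ k * schwartzNorm k (l + 1) g * ‖h‖ := by
  refine schwartzNorm_le_of_forall (by positivity) fun l' hl y => ?_
  have hsub : iteratedFDeriv ℝ l' (g.compSubConstCLM ℝ h - g) y =
      iteratedFDeriv ℝ l' g (y - h) - iteratedFDeriv ℝ l' g y := by
    have := iteratedFDeriv_sub_apply ((g.compSubConstCLM ℝ h).smooth l').contDiffAt
      ((g.smooth l').contDiffAt (x := y))
    rw [← iteratedFDeriv_comp_sub]
    exact this
  rw [hsub]
  exact one_add_norm_pow_mul_norm_iteratedFDeriv_sub_le k (Nat.lt_succ_of_le hl) g hh y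

theorem tendsto_translate_zero (g : 𝓢(V, ℝ)) :
    Tendsto (fun h : V => g.compSubConstCLM ℝ h) (𝓝 0) (𝓝 g) := by
  refine ((schwartz_withSeminorms ℝ V ℝ).tendsto_nhds _ g).2 fun i ε hε => ?_
  have hlim : Tendsto (fun h : V => 4 ^ i.1 * schwartzNorm i.1 (i.2 + 1) g * ‖h‖) (𝓝 0) (𝓝 0) :=
    Continuous.tendsto' (by fun_prop) _ _ (by simp)
  filter_upwards [hlim.eventually_lt_const hε, Metric.closedBall_mem_nhds (0 : V) one_pos]
    with h hlt hball
  have hle : schwartzSeminormFamily ℝ V ℝ i ≤ schwartzNorm i.1 i.2 :=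
    Finset.le_sup (Finset.mem_Iic.2 le_rfl)
  exact (hle _).trans_lt ((schwartzNorm_translate_sub_le i.1 i.2 g
    (mem_closedBall_zero_iff.1 hball)).trans_lt hlt)

theorem continuous_translate (g : 𝓢(V, ℝ)) : Continuous fun x : V => g.compSubConstCLM ℝ x := by
  refine continuous_iff_continuousAt.2 fun x => ?_
  have hsub : Tendsto (fun z : V => z - x) (𝓝 x) (𝓝 0) :=
    Continuous.tendsto' (by fun_prop) _ _ (sub_self x)
  refine (((SchwartzMap.compSubConstCLM ℝ x).continuous.tendsto g).comp
    ((tendsto_translate_zero g).comp hsub)).congr fun z => ?_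
  ext y
  simp

end Translation

section Taylor

variable {V : Type*} [NormedAddCommGroup V] [NormedSpace ℝ V]

/-- The Taylor polynomial of `η` at `x` of degree less than `N`, evaluated at the increment `w`. -/
def taylorSum (N : ℕ) (η : V → ℝ) (x w : V) : ℝ :=
  ∑ k ∈ Finset.range N, (k.factorial : ℝ)⁻¹ * iteratedFDeriv ℝ k η x fun _ => w

theorem abs_sub_taylorSum_le {N : ℕ} {η : V → ℝ} (hη : ContDiff ℝ N η) {x w : V} {M : ℝ}
    (hM : ∀ t ∈ Set.Icc (0 : ℝ) 1, ‖iteratedFDeriv ℝ N η (x + t • w)‖ ≤ M) :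
    |η (x + w) - taylorSum N η x w| ≤ M * ‖w‖ ^ N := by
  rcases N with - | n
  · simpa [taylorSum] using hM 1 (by simp)
  have hintegrand : ∀ t ∈ Set.uIoc (0 : ℝ) 1,
      ‖(1 - t) ^ n • iteratedFDeriv ℝ (n + 1) η (x + t • w) fun _ => w‖ ≤
        M * ‖w‖ ^ (n + 1) := fun t ht => by
    rw [Set.uIoc_of_le zero_le_one] at ht
    have hweight : (1 - t) ^ n ≤ 1 :=
      pow_le_one₀ (by linarith [ht.2]) (by linarith [ht.1])
    rw [norm_smul_of_nonneg (pow_nonneg (by linarith [ht.2]) n)]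
    refine (mul_le_of_le_one_left (norm_nonneg _) hweight).trans ?_
    refine (ContinuousMultilinearMap.le_opNorm _ _).trans ?_
    rw [Finset.prod_const, Finset.card_univ, Fintype.card_fin]
    gcongr
    exact hM t ⟨ht.1.le, ht.2⟩
  have hremainder := intervalIntegral.norm_integral_le_of_norm_le_const hintegrand
  rw [sub_zero, abs_one, mul_one] at hremainder
  rw [map_add_eq_sum_add_integral_iteratedFDeriv (n := n) (f := η) (x := x) (y := w)
    fun t _ => mod_cast hη.contDiffAt]
  simp only [smul_eq_mul, taylorSum] at hremainder ⊢
  rw [add_sub_cancel_left, abs_mul, abs_of_nonneg (by positivity)]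
  exact (mul_le_of_le_one_left (abs_nonneg _)
    (inv_le_one_of_one_le₀ (mod_cast n.factorial_pos))).trans hremainder

theorem mul_taylorSum_comp_eq_sum (θ η : V → ℝ) (N : ℕ) (A : V →L[ℝ] V) (x z : V) :
    θ z * taylorSum N η x (A z) = ∑ k ∈ Finset.range N, (k.factorial : ℝ)⁻¹ *
      (θ z * (iteratedFDeriv ℝ k η x).compContinuousLinearMap (fun _ => A) fun _ => z) := by
  rw [taylorSum, Finset.mul_sum]
  exact Finset.sum_congr rfl fun k _ => mul_left_comm _ _ _

theorem one_add_norm_pow_mul_abs_sub_taylorSum_le (K N : ℕ) (η : 𝓢(V, ℝ)) (x w : V) :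
    (1 + ‖x‖) ^ K * |η (x + w) - taylorSum N η x w| ≤
      2 ^ K * schwartzNorm K N η * (1 + ‖w‖) ^ K * ‖w‖ ^ N := by
  have hderiv : ∀ t ∈ Set.Icc (0 : ℝ) 1, ‖iteratedFDeriv ℝ N η (x + t • w)‖ ≤
      2 ^ K * schwartzNorm K N η * (1 + ‖w‖) ^ K / (1 + ‖x‖) ^ K := fun t ht => by
    have htw : ‖t • w‖ ≤ ‖w‖ := by
      rw [norm_smul_of_nonneg ht.1]
      exact mul_le_of_le_one_left (norm_nonneg w) ht.2
    have hx : 1 + ‖x‖ ≤ (1 + ‖w‖) * (1 + ‖x + t • w‖) := by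
      have := one_add_norm_add_le_mul (-(t • w)) (x + t • w)
      rw [neg_add_cancel_comm_assoc, norm_neg] at this
      exact this.trans (by gcongr)
    rw [le_div_iff₀' (by positivity)]
    calc (1 + ‖x‖) ^ K * ‖iteratedFDeriv ℝ N η (x + t • w)‖
        ≤ ((1 + ‖w‖) * (1 + ‖x + t • w‖)) ^ K * ‖iteratedFDeriv ℝ N η (x + t • w)‖ := by gcongr
      _ = (1 + ‖w‖) ^ K * ((1 + ‖x + t • w‖) ^ K * ‖iteratedFDeriv ℝ N η (x + t • w)‖) := by
          rw [mul_pow, mul_assoc]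
      _ ≤ (1 + ‖w‖) ^ K * (2 ^ K * schwartzNorm K N η) :=
          mul_le_mul_of_nonneg_left (one_add_norm_pow_mul_norm_iteratedFDeriv_le K le_rfl η _)
            (by positivity)
      _ = 2 ^ K * schwartzNorm K N η * (1 + ‖w‖) ^ K := mul_comm _ _
  have h := abs_sub_taylorSum_le (η.smooth N) hderiv
  rwa [div_mul_eq_mul_div, le_div_iff₀' (by positivity)] at h

end Taylor

section VanishingMoments

variable {V : Type*} [NormedAddCommGroup V] [NormedSpace ℝ V] [MeasurableSpace V]

/-- The moments of order less than `N` of `θ` with respect to `μ` vanish. The moments are taken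
against diagonals of continuous multilinear forms, the coordinate-free substitute for monomials. -/
def VanishingMomentsBelow (N : ℕ) (θ : V → ℝ) (μ : Measure V) : Prop :=
  ∀ k < N, ∀ D : V [×k]→L[ℝ] ℝ, ∫ z, θ z * D (fun _ => z) ∂μ = 0

variable [BorelSpace V] [SecondCountableTopology V] {μ : Measure V} [μ.HasTemperateGrowth]

theorem integrable_one_add_norm_pow_mul (θ : 𝓢(V, ℝ)) (k : ℕ) :
    Integrable (fun z => (1 + ‖z‖) ^ k * ‖θ z‖) μ := by
  simp only [add_comm (1 : ℝ), add_pow, one_pow, mul_one, Finset.sum_mul, mul_right_comm _ _ ‖θ _‖]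
  exact integrable_finsetSum _ fun i _ => (θ.integrable_pow_mul μ i).mul_const _

theorem integrable_mul_multilinear_diag (θ : 𝓢(V, ℝ)) {k : ℕ} (D : V [×k]→L[ℝ] ℝ) :
    Integrable (fun z => θ z * D fun _ => z) μ := by
  refine ((θ.integrable_pow_mul μ k).const_mul ‖D‖).mono'
    (θ.continuous.mul (D.cont.comp (by fun_prop))).aestronglyMeasurable
    (ae_of_all _ fun z => ?_)
  have hD : ‖D fun _ => z‖ ≤ ‖D‖ * ‖z‖ ^ k := by
    simpa only [Finset.prod_const, Finset.card_univ, Fintype.card_fin] using D.le_opNorm fun _ => z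
  calc ‖θ z * D fun _ => z‖ = ‖D fun _ => z‖ * ‖θ z‖ := by rw [norm_mul, mul_comm]
    _ ≤ ‖D‖ * ‖z‖ ^ k * ‖θ z‖ := by gcongr
    _ = ‖D‖ * (‖z‖ ^ k * ‖θ z‖) := mul_assoc _ _ _

theorem integrable_mul_taylorSum (θ : 𝓢(V, ℝ)) (η : V → ℝ) (N : ℕ) (A : V →L[ℝ] V) (x : V) :
    Integrable (fun z => θ z * taylorSum N η x (A z)) μ := by
  simp only [mul_taylorSum_comp_eq_sum]
  exact integrable_finsetSum _ fun k _ => (integrable_mul_multilinear_diag θ _).const_mul _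

theorem VanishingMomentsBelow.integral_mul_taylorSum {N : ℕ} {θ : 𝓢(V, ℝ)}
    (hθ : VanishingMomentsBelow N θ μ) (η : V → ℝ) (A : V →L[ℝ] V) (x : V) :
    ∫ z, θ z * taylorSum N η x (A z) ∂μ = 0 := by
  simp only [mul_taylorSum_comp_eq_sum]
  rw [integral_finsetSum _ fun k _ => (integrable_mul_multilinear_diag θ _).const_mul _]
  refine Finset.sum_eq_zero fun k hk => ?_
  rw [integral_const_mul, hθ k (Finset.mem_range.1 hk), mul_zero]

theorem integrable_mul_comp_add (θ η : 𝓢(V, ℝ)) (A : V →L[ℝ] V) (x : V) :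
    Integrable (fun z => θ z * η (x + A z)) μ :=
  θ.integrable.mul_bdd (c := SchwartzMap.seminorm ℝ 0 0 η)
    (η.continuous.comp (continuous_const.add A.continuous)).aestronglyMeasurable
    (ae_of_all _ fun z => η.norm_le_seminorm ℝ (x + A z))

theorem VanishingMomentsBelow.exists_integral_mul_contraction_le {N : ℕ} {θ : 𝓢(V, ℝ)}
    (hθ : VanishingMomentsBelow N θ μ) (K : ℕ) :
    ∃ C : ℝ, 0 ≤ C ∧ ∀ A : V →L[ℝ] V, ‖A‖ ≤ 1 → ∀ (η : 𝓢(V, ℝ)) (x : V),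
      (1 + ‖x‖) ^ K * |∫ z, θ z * η (x + A z) ∂μ| ≤ C * ‖A‖ ^ N * schwartzNorm K N η := by
  refine ⟨2 ^ K * ∫ z, (1 + ‖z‖) ^ (K + N) * ‖θ z‖ ∂μ, by positivity, fun A hA η x => ?_⟩
  set P := schwartzNorm K N η
  have hremainder : ∀ z, (1 + ‖x‖) ^ K * |η (x + A z) - taylorSum N η x (A z)| ≤
      2 ^ K * P * ‖A‖ ^ N * (1 + ‖z‖) ^ (K + N) := fun z => by
    calc (1 + ‖x‖) ^ K * |η (x + A z) - taylorSum N η x (A z)|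
        ≤ 2 ^ K * P * (1 + ‖A z‖) ^ K * ‖A z‖ ^ N :=
          one_add_norm_pow_mul_abs_sub_taylorSum_le K N η x (A z)
      _ ≤ 2 ^ K * P * (1 + ‖z‖) ^ K * (‖A‖ * (1 + ‖z‖)) ^ N := by
          gcongr
          · exact A.le_of_opNorm_le hA z |>.trans_eq (one_mul _)
          · exact (A.le_opNorm z).trans (by gcongr; linarith)
      _ = 2 ^ K * P * ‖A‖ ^ N * (1 + ‖z‖) ^ (K + N) := by rw [mul_pow, pow_add]; ring
  have hcancel : ∫ z, θ z * η (x + A z) ∂μ =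
      ∫ z, θ z * (η (x + A z) - taylorSum N η x (A z)) ∂μ := by
    simp only [mul_sub]
    rw [integral_sub (integrable_mul_comp_add θ η A x) (integrable_mul_taylorSum θ η N A x),
      hθ.integral_mul_taylorSum, sub_zero]
  calc (1 + ‖x‖) ^ K * |∫ z, θ z * η (x + A z) ∂μ|
      = ‖∫ z, (1 + ‖x‖) ^ K * (θ z * (η (x + A z) - taylorSum N η x (A z))) ∂μ‖ := by
        rw [hcancel, integral_const_mul, norm_mul, Real.norm_of_nonneg (by positivity),
          Real.norm_eq_abs]
    _ ≤ ∫ z, 2 ^ K * P * ‖A‖ ^ N * ((1 + ‖z‖) ^ (K + N) * ‖θ z‖) ∂μ := by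
        refine norm_integral_le_of_norm_le ((integrable_one_add_norm_pow_mul θ _).const_mul _)
          (ae_of_all _ fun z => ?_)
        rw [norm_mul, Real.norm_of_nonneg (by positivity), norm_mul, Real.norm_eq_abs (_ - _),
          mul_left_comm, mul_comm ‖θ z‖, ← mul_assoc (_ * _) _ ‖θ z‖]
        exact mul_le_mul_of_nonneg_right (hremainder z) (norm_nonneg _)
    _ = 2 ^ K * (∫ z, (1 + ‖z‖) ^ (K + N) * ‖θ z‖ ∂μ) * ‖A‖ ^ N * P := by
        rw [integral_const_mul]
        ring

end VanishingMoments

section Coordinates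

variable {m : ℕ}

theorem multilinear_diag_eq_sum {k : ℕ} (D : (Fin m → ℝ) [×k]→L[ℝ] ℝ) (z : Fin m → ℝ) :
    D (fun _ => z) =
      ∑ r : Fin k → Fin m, (∏ i, z (r i)) * D fun i => Pi.single (r i) 1 := by
  conv_lhs => rw [pi_eq_sum_univ' z, D.map_sum fun _ s => z s • _]
  exact Finset.sum_congr rfl fun r _ => D.map_smul_univ _ _

theorem integrable_mul_prod_coord (θ : 𝓢(Fin m → ℝ, ℝ)) {k : ℕ} (r : Fin k → Fin m) :
    Integrable fun z : Fin m → ℝ => θ z * ∏ i, z (r i) := by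
  simpa using integrable_mul_multilinear_diag (μ := volume) θ
    ((ContinuousMultilinearMap.mkPiAlgebra ℝ (Fin k) ℝ).compContinuousLinearMap fun i =>
      ContinuousLinearMap.proj (r i))

theorem VanishingMoments.integral_mul_prod_coord {θ : (Fin m → ℝ) → ℝ}
    (hθ : VanishingMoments θ) {k : ℕ} (r : Fin k → Fin m) : ∫ z, θ z * ∏ i, z (r i) = 0 := by
  rw [← hθ fun s => Finset.card {i | r i = s}]
  congr with z
  rw [mul_comm, ← Finset.prod_fiberwise' Finset.univ r z]
  simp only [Finset.prod_const]

theorem VanishingMoments.vanishingMomentsBelow {θ : 𝓢(Fin m → ℝ, ℝ)}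
    (hθ : VanishingMoments θ) (N : ℕ) : VanishingMomentsBelow N θ volume := by
  intro k _ D
  simp only [multilinear_diag_eq_sum D, Finset.mul_sum, ← mul_assoc]
  rw [integral_finsetSum _ fun r _ => (integrable_mul_prod_coord θ r).mul_const _]
  exact Finset.sum_eq_zero fun r _ => by
    rw [integral_mul_const, hθ.integral_mul_prod_coord r, zero_mul]

end Coordinates

section Correlation

variable {V : Type*} [NormedAddCommGroup V] [NormedSpace ℝ V]

theorem exists_abs_apply_translate_le (f : 𝓢(V, ℝ) →L[ℝ] ℝ) :
    ∃ (M l : ℕ) (C : ℝ), 0 ≤ C ∧ ∀ (g : 𝓢(V, ℝ)) (x : V),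
      |f (g.compSubConstCLM ℝ x)| ≤ C * schwartzNorm M l g * (1 + ‖x‖) ^ M := by
  obtain ⟨M, l, C, hC, hf⟩ := exists_abs_apply_le_schwartzNorm f
  refine ⟨M, l, 2 ^ M * C, by positivity, fun g x => ?_⟩
  calc |f (g.compSubConstCLM ℝ x)| ≤ C * (2 ^ M * (1 + ‖x‖) ^ M * schwartzNorm M l g) :=
        (hf _).trans (mul_le_mul_of_nonneg_left (schwartzNorm_translate_le M l g x) hC)
    _ = 2 ^ M * C * schwartzNorm M l g * (1 + ‖x‖) ^ M := by ring

variable [MeasurableSpace V] [BorelSpace V] [SecondCountableTopology V]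
  (μ : Measure V) [μ.HasTemperateGrowth]

/-- The correlation `x ↦ ∫ G(y - x) η(y) dμ(y)` of Schwartz functions, that is `Ǧ * η`, as a linear
map in `η`. Its values are mere functions, since this is all that the pairing with a function of
polynomial growth requires. -/
def correlation (G : 𝓢(V, ℝ)) : 𝓢(V, ℝ) →ₗ[ℝ] V → ℝ :=
  LinearMap.pi fun x =>
    (SchwartzMap.integralCLM ℝ μ ∘L SchwartzMap.smulLeftCLM ℝ (G.compSubConstCLM ℝ x)).toLinearMap

theorem correlation_apply (G η : 𝓢(V, ℝ)) (x : V) :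
    correlation μ G η x = ∫ y, G (y - x) * η y ∂μ := by
  simp [correlation, SchwartzMap.smulLeftCLM_apply_apply
    (SchwartzMap.hasTemperateGrowth (G.compSubConstCLM ℝ x))]

theorem continuous_correlation (G η : 𝓢(V, ℝ)) : Continuous (correlation μ G η) := by
  refine ((SchwartzMap.integralCLM ℝ μ ∘L SchwartzMap.smulLeftCLM ℝ η).continuous.comp
    (continuous_translate G)).congr fun x => ?_
  simp [correlation_apply, SchwartzMap.smulLeftCLM_apply_apply η.hasTemperateGrowth, mul_comm]

theorem correlation_eq_integral_add [μ.IsAddLeftInvariant] (G η : 𝓢(V, ℝ)) (x : V) :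
    correlation μ G η x = ∫ z, G z * η (x + z) ∂μ := by
  rw [correlation_apply, ← integral_add_left_eq_self _ x]
  simp only [add_sub_cancel_left]

end Correlation

section AnisotropicDilation

variable {m : ℕ} (a : Fin m → ℝ) (j : ℕ)

/-- The anisotropic scaling `x ↦ 2^{ja}x` of `ℝᵐ`. -/
def anisoScaling : (Fin m → ℝ) ≃L[ℝ] (Fin m → ℝ) :=
  ContinuousLinearEquiv.piCongrRight fun i => ContinuousLinearEquiv.unitsEquivAut ℝ
    (Units.mk0 ((2 : ℝ) ^ ((j : ℝ) * a i)) (Real.rpow_pos_of_pos two_pos _).ne')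

theorem anisoScaling_apply (x : Fin m → ℝ) (i : Fin m) :
    anisoScaling a j x i = 2 ^ ((j : ℝ) * a i) * x i :=
  mul_comm _ _

theorem anisoScaling_symm_apply (x : Fin m → ℝ) (i : Fin m) :
    (anisoScaling a j).symm x i = 2 ^ (-((j : ℝ) * a i)) * x i := by
  rw [Real.rpow_neg zero_le_two]
  exact mul_comm _ _

theorem opNorm_le_of_abs_coord_le {A : (Fin m → ℝ) →L[ℝ] Fin m → ℝ} {R : ℝ} (hR : 0 ≤ R)
    (hA : ∀ x i, |A x i| ≤ R * |x i|) : ‖A‖ ≤ R :=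
  A.opNorm_le_bound hR fun x => (pi_norm_le_iff_of_nonneg (by positivity)).2 fun i =>
    (hA x i).trans (mul_le_mul_of_nonneg_left (norm_le_pi_norm x i) hR)

variable {a}

theorem norm_anisoScaling_le (ha : ∀ i, 0 ≤ a i) :
    ‖(anisoScaling a j : (Fin m → ℝ) →L[ℝ] Fin m → ℝ)‖ ≤ 2 ^ ((j : ℝ) * ∑ i, a i) := by
  refine opNorm_le_of_abs_coord_le (by positivity) fun x i => ?_
  rw [ContinuousLinearEquiv.coe_coe, anisoScaling_apply, abs_mul, abs_of_pos (by positivity)]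
  gcongr
  · exact one_le_two
  · exact Finset.single_le_sum (fun i _ => ha i) (Finset.mem_univ i)

theorem norm_anisoScaling_symm_le {δ : ℝ} (hδ : ∀ i, δ ≤ a i) :
    ‖((anisoScaling a j).symm : (Fin m → ℝ) →L[ℝ] Fin m → ℝ)‖ ≤ 2 ^ (-((j : ℝ) * δ)) := by
  refine opNorm_le_of_abs_coord_le (by positivity) fun x i => ?_
  rw [ContinuousLinearEquiv.coe_coe, anisoScaling_symm_apply, abs_mul, abs_of_pos (by positivity)]
  gcongr
  · exact one_le_two
  · exact hδ i

theorem norm_le_norm_anisoScaling (ha : ∀ i, 0 ≤ a i) (x : Fin m → ℝ) :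
    ‖x‖ ≤ ‖anisoScaling a j x‖ := by
  refine (pi_norm_le_iff_of_nonneg (norm_nonneg _)).2 fun i => ?_
  refine le_trans ?_ (norm_le_pi_norm (anisoScaling a j x) i)
  rw [anisoScaling_apply, norm_mul]
  exact le_mul_of_one_le_left (norm_nonneg _) ((Real.one_le_rpow one_le_two
    (mul_nonneg j.cast_nonneg (ha i))).trans (Real.le_norm_self _))

variable (a)

theorem det_anisoScaling :
    LinearMap.det ((anisoScaling a j : (Fin m → ℝ) →L[ℝ] Fin m → ℝ) :
      (Fin m → ℝ) →ₗ[ℝ] Fin m → ℝ) = 2 ^ ((j : ℝ) * ∑ i, a i) := by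
  have hdiag : ((anisoScaling a j : (Fin m → ℝ) →L[ℝ] Fin m → ℝ) :
      (Fin m → ℝ) →ₗ[ℝ] Fin m → ℝ) =
        Matrix.toLin' (Matrix.diagonal fun i => (2 : ℝ) ^ ((j : ℝ) * a i)) := by
    refine LinearMap.ext fun x => funext fun i => ?_
    rw [Matrix.toLin'_apply, Matrix.mulVec_diagonal]
    exact anisoScaling_apply a j x i
  rw [hdiag, LinearMap.det_toLin', Matrix.det_diagonal, ← Real.rpow_sum_of_pos two_pos,
    Finset.mul_sum]

theorem integral_comp_anisoScaling (g : (Fin m → ℝ) → ℝ) :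
    2 ^ ((j : ℝ) * ∑ i, a i) * ∫ x, g (anisoScaling a j x) = ∫ x, g x := by
  have h := integral_image_eq_integral_abs_det_fderiv_smul (volume : Measure (Fin m → ℝ))
    MeasurableSet.univ (fun x _ => (anisoScaling a j).hasFDerivAt.hasFDerivWithinAt)
    (anisoScaling a j).injective.injOn g
  rw [Set.image_univ, (anisoScaling a j).surjective.range_eq, ContinuousLinearMap.det,
    det_anisoScaling, abs_of_pos (by positivity)] at h
  simpa only [setIntegral_univ, smul_eq_mul, integral_const_mul] using h.symm

/-- `anisoDil` as an operation on Schwartz functions. -/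
def schwartzAnisoDil (θ₀ θ : 𝓢(Fin m → ℝ, ℝ)) : 𝓢(Fin m → ℝ, ℝ) :=
  if j = 0 then θ₀ else (2 : ℝ) ^ ((j : ℝ) * ∑ i, a i) •
    SchwartzMap.compCLMOfContinuousLinearEquiv ℝ (anisoScaling a j) θ

theorem coe_schwartzAnisoDil (θ₀ θ : 𝓢(Fin m → ℝ, ℝ)) :
    ⇑(schwartzAnisoDil a j θ₀ θ) = anisoDil a θ₀ θ j := by
  funext x
  rcases eq_or_ne j 0 with hj | hj
  · simp only [schwartzAnisoDil, anisoDil, if_pos hj]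
  · simp only [schwartzAnisoDil, anisoDil, if_neg hj, ← anisoScaling_apply]
    rfl

variable {a}

theorem schwartzNorm_schwartzAnisoDil_le (ha : ∀ i, 0 ≤ a i) (θ₀ θ : 𝓢(Fin m → ℝ, ℝ))
    (k l : ℕ) : schwartzNorm k l (schwartzAnisoDil a j θ₀ θ) ≤
      2 ^ k * (schwartzNorm k l θ₀ + schwartzNorm k l θ) * ((2 ^ ∑ i, a i) ^ (l + 1)) ^ j := by
  set R : ℝ := 2 ^ ((j : ℝ) * ∑ i, a i)
  have hsum : 0 ≤ ∑ i, a i := Finset.sum_nonneg fun i _ => ha i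
  have hR : 1 ≤ R := Real.one_le_rpow one_le_two (by positivity)
  have hRpow : ((2 ^ ∑ i, a i) ^ (l + 1)) ^ j = R ^ (l + 1) := by
    simp only [R]
    rw [pow_right_comm, mul_comm, Real.rpow_mul_natCast zero_le_two]
  rw [hRpow]
  rcases eq_or_ne j 0 with hj | hj
  · rw [schwartzAnisoDil, if_pos hj]
    calc schwartzNorm k l θ₀ ≤ schwartzNorm k l θ₀ + schwartzNorm k l θ :=
          le_add_of_nonneg_right (apply_nonneg _ _)
      _ ≤ 2 ^ k * (schwartzNorm k l θ₀ + schwartzNorm k l θ) :=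
          le_mul_of_one_le_left (by positivity) (one_le_pow₀ one_le_two)
      _ ≤ 2 ^ k * (schwartzNorm k l θ₀ + schwartzNorm k l θ) * R ^ (l + 1) :=
          le_mul_of_one_le_right (by positivity) (one_le_pow₀ hR)
  · rw [schwartzAnisoDil, if_neg hj, map_smul_eq_mul, Real.norm_of_nonneg (by positivity)]
    calc R * schwartzNorm k l (SchwartzMap.compCLMOfContinuousLinearEquiv ℝ (anisoScaling a j) θ)
        ≤ R * (2 ^ k * R ^ l * schwartzNorm k l θ) := by
          gcongr
          exact schwartzNorm_comp_le _ (norm_le_norm_anisoScaling j ha) hR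
            (norm_anisoScaling_le j ha) k l θ
      _ = 2 ^ k * schwartzNorm k l θ * R ^ (l + 1) := by ring
      _ ≤ 2 ^ k * (schwartzNorm k l θ₀ + schwartzNorm k l θ) * R ^ (l + 1) := by
          gcongr
          exact le_add_of_nonneg_left (apply_nonneg _ _)

theorem exists_abs_apply_translate_schwartzAnisoDil_le (ha : ∀ i, 0 ≤ a i)
    (θ₀ θ : 𝓢(Fin m → ℝ, ℝ)) (f : 𝓢(Fin m → ℝ, ℝ) →L[ℝ] ℝ) :
    ∃ (M : ℕ) (A R : ℝ), 0 ≤ A ∧ 0 ≤ R ∧ ∀ j x,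
      |f ((schwartzAnisoDil a j θ₀ θ).compSubConstCLM ℝ x)| ≤ A * R ^ j * (1 + ‖x‖) ^ M := by
  obtain ⟨M, l, C, hC, hf⟩ := exists_abs_apply_translate_le f
  refine ⟨M, C * (2 ^ M * (schwartzNorm M l θ₀ + schwartzNorm M l θ)),
    (2 ^ ∑ i, a i) ^ (l + 1), by positivity, by positivity, fun j x => (hf _ x).trans ?_⟩
  rw [mul_assoc C (_ * _)]
  gcongr
  exact schwartzNorm_schwartzAnisoDil_le j ha θ₀ θ M l

theorem correlation_schwartzAnisoDil (ψ₀ ψ η : 𝓢(Fin m → ℝ, ℝ)) (hj : j ≠ 0) (x : Fin m → ℝ) :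
    correlation volume (schwartzAnisoDil a j ψ₀ ψ) η x =
      ∫ z, ψ z * η (x + (anisoScaling a j).symm z) := by
  rw [correlation_eq_integral_add, ← integral_comp_anisoScaling a j
    fun z => ψ z * η (x + (anisoScaling a j).symm z), ← integral_const_mul]
  congr with y
  rw [ContinuousLinearEquiv.symm_apply_apply, schwartzAnisoDil, if_neg hj, ← mul_assoc]
  rfl

theorem exists_correlation_schwartzAnisoDil_le {δ : ℝ} (hδ : 0 ≤ δ) (ha : ∀ i, δ ≤ a i)
    (ψ₀ : 𝓢(Fin m → ℝ, ℝ)) {ψ : 𝓢(Fin m → ℝ, ℝ)} {N : ℕ}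
    (hψ : VanishingMomentsBelow N ψ volume) (K : ℕ) :
    ∃ C : ℝ, ∀ (j : ℕ) (η : 𝓢(Fin m → ℝ, ℝ)) (x : Fin m → ℝ),
      (1 + ‖x‖) ^ K * |correlation volume (schwartzAnisoDil a j ψ₀ ψ) η x| ≤
        C * ((2 ^ (-δ)) ^ N) ^ j * schwartzNorm K N η := by
  have hψ₀ : VanishingMomentsBelow 0 ψ₀ volume := fun k hk => (Nat.not_lt_zero k hk).elim
  obtain ⟨C₀, hC₀, h₀⟩ := hψ₀.exists_integral_mul_contraction_le K
  obtain ⟨C₁, hC₁, h₁⟩ := hψ.exists_integral_mul_contraction_le K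
  refine ⟨C₀ + C₁, fun j η x => ?_⟩
  rcases eq_or_ne j 0 with rfl | hj
  · have h := h₀ (ContinuousLinearMap.id ℝ _) ContinuousLinearMap.norm_id_le η x
    rw [correlation_eq_integral_add, schwartzAnisoDil, if_pos rfl]
    refine h.trans ?_
    rw [pow_zero, pow_zero]
    gcongr
    · exact le_add_of_nonneg_right hC₁
    · exact schwartzNorm_mono le_rfl N.zero_le η
  · have hnorm := norm_anisoScaling_symm_le j ha
    have hpow : ((2 : ℝ) ^ (-(j * δ))) ^ N = ((2 ^ (-δ)) ^ N) ^ j := by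
      rw [pow_right_comm, ← Real.rpow_mul_natCast zero_le_two (-δ), neg_mul, mul_comm δ]
    rw [correlation_schwartzAnisoDil j ψ₀ ψ η hj, ← hpow]
    refine (h₁ _ (hnorm.trans (Real.rpow_le_one_of_one_le_of_nonpos one_le_two ?_)) η x).trans ?_
    · exact neg_nonpos.2 (by positivity)
    · gcongr
      exact le_add_of_nonneg_left hC₀

end AnisotropicDilation

section Pairing

theorem exists_hasSum_of_abs_le_mul_seminorm {ι E : Type*} [AddCommGroup E] [Module ℝ E]
    [TopologicalSpace E] [IsTopologicalAddGroup E] {p : Seminorm ℝ E} (hp : Continuous p)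
    {T : ι → E →ₗ[ℝ] ℝ} {b : ι → ℝ} (hb : Summable b) (hT : ∀ j η, |T j η| ≤ b j * p η) :
    ∃ L : E →L[ℝ] ℝ, ∀ η, Summable (fun j => |T j η|) ∧ HasSum (fun j => T j η) (L η) := by
  have habs : ∀ η, Summable fun j => |T j η| := fun η =>
    .of_nonneg_of_le (fun _ => abs_nonneg _) (hT · η) (hb.mul_right (p η))
  have hsum : ∀ η, Summable fun j => T j η := fun η => (habs η).of_abs
  let L : E →ₗ[ℝ] ℝ :=
    { toFun := fun η => ∑' j, T j η
      map_add' := fun η ξ => by simp only [map_add, (hsum η).tsum_add (hsum ξ)]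
      map_smul' := fun c η => by
        simp only [map_smul, smul_eq_mul, tsum_mul_left, RingHom.id_apply] }
  have hL : ∀ η, ‖L η‖ ≤ (∑' j, b j) * p η := fun η =>
    tsum_of_norm_bounded (hb.hasSum.mul_right (p η)) (hT · η)
  have hcont : Continuous L := by
    refine continuous_of_continuousAt_zero L ?_
    rw [ContinuousAt, map_zero]
    exact squeeze_zero_norm hL (Continuous.tendsto' (by fun_prop) _ _ (by simp))
  exact ⟨⟨L, hcont⟩, fun η => ⟨habs η, (hsum η).hasSum⟩⟩

theorem norm_mul_le_rpow_neg_of_growth_of_decay {V : Type*} [SeminormedAddCommGroup V]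
    {u w A B : ℝ} {x : V} {M d : ℕ} (hA : 0 ≤ A) (hu : |u| ≤ A * (1 + ‖x‖) ^ M)
    (hw : (1 + ‖x‖) ^ (M + d) * |w| ≤ B) : ‖u * w‖ ≤ A * B * (1 + ‖x‖) ^ (-(d : ℝ)) := by
  rw [Real.rpow_neg (by positivity), Real.rpow_natCast, ← div_eq_mul_inv,
    le_div_iff₀ (by positivity), norm_mul, Real.norm_eq_abs, Real.norm_eq_abs]
  calc |u| * |w| * (1 + ‖x‖) ^ d ≤ A * (1 + ‖x‖) ^ M * |w| * (1 + ‖x‖) ^ d := by gcongr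
    _ = A * ((1 + ‖x‖) ^ (M + d) * |w|) := by rw [pow_add]; ring
    _ ≤ A * B := mul_le_mul_of_nonneg_left hw hA

variable {V : Type*} [NormedAddCommGroup V] [MeasurableSpace V]

theorem hasTemperateGrowth_restrict (μ : Measure V) [hμ : μ.HasTemperateGrowth] (s : Set V) :
    (μ.restrict s).HasTemperateGrowth :=
  ⟨hμ.exists_integrable.imp fun _ h => h.restrict⟩

variable {μ : Measure V} [μ.HasTemperateGrowth]

theorem integrable_mul_of_growth_of_decay {u w : V → ℝ} {A B : ℝ} {M : ℕ} (hA : 0 ≤ A)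
    (hu : ∀ x, |u x| ≤ A * (1 + ‖x‖) ^ M)
    (hw : ∀ x, (1 + ‖x‖) ^ (M + μ.integrablePower) * |w x| ≤ B)
    (hum : AEStronglyMeasurable u μ) (hwm : AEStronglyMeasurable w μ) :
    Integrable (fun x => u x * w x) μ :=
  ((Measure.integrable_pow_neg_integrablePower μ).const_mul (A * B)).mono' (hum.mul hwm)
    (ae_of_all _ fun x => norm_mul_le_rpow_neg_of_growth_of_decay hA (hu x) (hw x))

theorem abs_integral_mul_le_of_growth_of_decay {u w : V → ℝ} {A B : ℝ} {M : ℕ} (hA : 0 ≤ A)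
    (hu : ∀ x, |u x| ≤ A * (1 + ‖x‖) ^ M)
    (hw : ∀ x, (1 + ‖x‖) ^ (M + μ.integrablePower) * |w x| ≤ B) :
    |∫ x, u x * w x ∂μ| ≤ A * B * ∫ x, (1 + ‖x‖) ^ (-(μ.integrablePower : ℝ)) ∂μ := by
  rw [← integral_const_mul]
  exact norm_integral_le_of_norm_le ((Measure.integrable_pow_neg_integrablePower μ).const_mul _)
    (ae_of_all _ fun x => norm_mul_le_rpow_neg_of_growth_of_decay hA (hu x) (hw x))

theorem exists_hasSum_integral_mul {E : Type*} [AddCommGroup E] [Module ℝ E]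
    [TopologicalSpace E] [IsTopologicalAddGroup E] {p : Seminorm ℝ E} (hp : Continuous p)
    {F : ℕ → V → ℝ} {W : ℕ → E →ₗ[ℝ] V → ℝ} {A C R s : ℝ} {M : ℕ} (hA : 0 ≤ A)
    (hR : 0 ≤ R) (hs : 0 ≤ s) (hRs : R * s < 1)
    (hF : ∀ j x, |F j x| ≤ A * R ^ j * (1 + ‖x‖) ^ M)
    (hW : ∀ j η x, (1 + ‖x‖) ^ (M + μ.integrablePower) * |W j η x| ≤ C * s ^ j * p η)
    (hFm : ∀ j, AEStronglyMeasurable (F j) μ) (hWm : ∀ j η, AEStronglyMeasurable (W j η) μ) :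
    ∃ L : E →L[ℝ] ℝ, ∀ η, Summable (fun j => |∫ x, F j x * W j η x ∂μ|) ∧
      HasSum (fun j => ∫ x, F j x * W j η x ∂μ) (L η) := by
  have hAR : ∀ j, 0 ≤ A * R ^ j := fun j => by positivity
  have hint : ∀ j η, Integrable (fun x => F j x * W j η x) μ := fun j η =>
    integrable_mul_of_growth_of_decay (hAR j) (hF j) (hW j η) (hFm j) (hWm j η)
  let T (j : ℕ) : E →ₗ[ℝ] ℝ :=
    { toFun := fun η => ∫ x, F j x * W j η x ∂μ
      map_add' := fun η ξ => by
        simp only [map_add, Pi.add_apply, mul_add]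
        exact integral_add (hint j η) (hint j ξ)
      map_smul' := fun c η => by
        simp only [map_smul, Pi.smul_apply, smul_eq_mul, mul_left_comm _ c, RingHom.id_apply]
        exact integral_const_mul c _ }
  let b (j : ℕ) : ℝ := A * C * (∫ x, (1 + ‖x‖) ^ (-(μ.integrablePower : ℝ)) ∂μ) * (R * s) ^ j
  have hb : Summable b := (summable_geometric_of_lt_one (mul_nonneg hR hs) hRs).mul_left _
  have hT : ∀ j η, |T j η| ≤ b j * p η := fun j η =>
    (abs_integral_mul_le_of_growth_of_decay (hAR j) (hF j) (hW j η)).trans_eq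
      (by simp only [b, mul_pow]; ring)
  exact exists_hasSum_of_abs_le_mul_seminorm (T := T) hp hb hT

end Pairing

section UniversalExtension

/-- The reflection `θ ↦ θ̌`, where `θ̌(x) = θ(-x)`. -/
def schwartzReflection {V : Type*} [NormedAddCommGroup V] [NormedSpace ℝ V] :
    𝓢(V, ℝ) →L[ℝ] 𝓢(V, ℝ) :=
  SchwartzMap.compCLMOfContinuousLinearEquiv ℝ (ContinuousLinearEquiv.neg ℝ)

variable {m : ℕ} {a : Fin m → ℝ}

theorem eq_reflection_translate_schwartzAnisoDil {j : ℕ} {φ₀ φ g : 𝓢(Fin m → ℝ, ℝ)}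
    {x : Fin m → ℝ} (hg : ∀ y, g y = anisoDil a φ₀ φ j (x - y)) :
    g = schwartzReflection ((schwartzAnisoDil a j φ₀ φ).compSubConstCLM ℝ (-x)) := by
  ext y
  simp [schwartzReflection, hg, coe_schwartzAnisoDil, neg_add_eq_sub]

theorem exists_bound_and_continuous_apply_anisoDil (ha : ∀ i, 0 ≤ a i)
    {φ₀ φ : 𝓢(Fin m → ℝ, ℝ)} (f : 𝓢(Fin m → ℝ, ℝ) →L[ℝ] ℝ)
    {tr : ℕ → (Fin m → ℝ) → 𝓢(Fin m → ℝ, ℝ)}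
    (htr : ∀ j x y, tr j x y = anisoDil a φ₀ φ j (x - y)) :
    ∃ (M : ℕ) (A R : ℝ), 0 ≤ A ∧ 0 ≤ R ∧
      (∀ j x, |f (tr j x)| ≤ A * R ^ j * (1 + ‖x‖) ^ M) ∧ ∀ j, Continuous fun x => f (tr j x) := by
  obtain ⟨M, A, R, hA, hR, hbound⟩ :=
    exists_abs_apply_translate_schwartzAnisoDil_le ha φ₀ φ (f ∘L schwartzReflection)
  have htr' : ∀ j x, f (tr j x) = (f ∘L schwartzReflection)
      ((schwartzAnisoDil a j φ₀ φ).compSubConstCLM ℝ (-x)) := fun j x =>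
    congrArg f (eq_reflection_translate_schwartzAnisoDil (htr j x))
  refine ⟨M, A, R, hA, hR, fun j x => ?_, fun j => ?_⟩
  · rw [htr', ← norm_neg x]
    exact hbound j (-x)
  · simp only [htr']
    exact (f ∘L schwartzReflection).continuous.comp ((continuous_translate _).comp continuous_neg)

theorem exists_pow_mul_lt_one {r : ℝ} (hr₀ : 0 ≤ r) (hr₁ : r < 1) (R : ℝ) :
    ∃ N : ℕ, R * r ^ N < 1 := by
  have hlim := (tendsto_pow_atTop_nhds_zero_of_lt_one hr₀ hr₁).const_mul R
  rw [mul_zero] at hlim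
  exact (hlim.eventually_lt_const one_pos).exists

theorem universal_extension_series_converges_general (ha : ∀ i, 0 < a i)
    {φ₀ φ : 𝓢(Fin m → ℝ, ℝ)} (ψ₀ : 𝓢(Fin m → ℝ, ℝ)) {ψ : 𝓢(Fin m → ℝ, ℝ)}
    (hψm : VanishingMoments ψ) (f : 𝓢(Fin m → ℝ, ℝ) →L[ℝ] ℝ)
    {tr : ℕ → (Fin m → ℝ) → 𝓢(Fin m → ℝ, ℝ)}
    (htr : ∀ j x y, tr j x y = anisoDil a φ₀ φ j (x - y))
    (μ : Measure (Fin m → ℝ)) [μ.HasTemperateGrowth] :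
    ∃ E : 𝓢(Fin m → ℝ, ℝ) →L[ℝ] ℝ, ∀ (η : 𝓢(Fin m → ℝ, ℝ)) (c : ℕ → 𝓢(Fin m → ℝ, ℝ)),
      (∀ j x, c j x = ∫ y, anisoDil a ψ₀ ψ j (y - x) * η y) →
      Summable (fun j => |∫ x, f (tr j x) * c j x ∂μ|) ∧
        HasSum (fun j => ∫ x, f (tr j x) * c j x ∂μ) (E η) := by
  obtain ⟨M, A, R, hA, hR, hgrowth, hcont⟩ :=
    exists_bound_and_continuous_apply_anisoDil (fun i => (ha i).le) f htr
  obtain ⟨δ, hδ, hδa⟩ := Pi.exists_forall_pos_add_lt ha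
  obtain ⟨N, hN⟩ := exists_pow_mul_lt_one (by positivity)
    (Real.rpow_lt_one_of_one_lt_of_neg one_lt_two (neg_lt_zero.2 hδ)) R
  obtain ⟨C, hdecay⟩ := exists_correlation_schwartzAnisoDil_le hδ.le
    (fun i => by simpa using (hδa i).le) ψ₀ (hψm.vanishingMomentsBelow N) (M + μ.integrablePower)
  obtain ⟨E, hE⟩ := exists_hasSum_integral_mul (continuous_schwartzNorm _ N) hA hR (by positivity)
    hN hgrowth hdecay (fun j => (hcont j).aestronglyMeasurable)
    (fun j η => (continuous_correlation volume _ η).aestronglyMeasurable)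
  refine ⟨E, fun η c hc => ?_⟩
  have hcorr : ∀ j x, c j x = correlation volume (schwartzAnisoDil a j ψ₀ ψ) η x := fun j x => by
    rw [hc, correlation_apply, coe_schwartzAnisoDil]
  simpa only [hcorr] using hE η

end UniversalExtension

/-- For `φ₀, φ, ψ₀, ψ ∈ 𝓢(ℝⁿ)` supported in `{xₙ < 0}`, with `φ` and `ψ`
having vanishing moments of all orders, and any `f ∈ 𝓢'(ℝⁿ)`, the series
`Σ_j ⟨e₊(φ_j * f), ψ̌_j * η⟩` converges absolutely for every `η ∈ 𝓢(ℝⁿ)` and defines a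
tempered distribution `E_u(f)`; i.e. `E_u(f) = Σ_j ψ_j * e₊(φ_j * f)` converges weak*. -/
theorem universal_extension_series_converges (n : ℕ) (a : Fin (n+1) → ℝ)
    (ha : ∀ i, 1 ≤ a i)
    (φ₀ φ ψ₀ ψ : SchwartzMap (Fin (n+1) → ℝ) ℝ)
    (hφ₀s : tsupport ⇑φ₀ ⊆ {x : Fin (n+1) → ℝ | x (Fin.last n) < 0})
    (hφs : tsupport ⇑φ ⊆ {x : Fin (n+1) → ℝ | x (Fin.last n) < 0})
    (hψ₀s : tsupport ⇑ψ₀ ⊆ {x : Fin (n+1) → ℝ | x (Fin.last n) < 0})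
    (hψs : tsupport ⇑ψ ⊆ {x : Fin (n+1) → ℝ | x (Fin.last n) < 0})
    (hφm : VanishingMoments ⇑φ) (hψm : VanishingMoments ⇑ψ)
    (f : SchwartzMap (Fin (n+1) → ℝ) ℝ →L[ℝ] ℝ)
    -- `tr j x` is the Schwartz function `y ↦ φ_j(x − y)`, so that `(φ_j * f)(x) = f (tr j x)`
    (tr : ℕ → (Fin (n+1) → ℝ) → SchwartzMap (Fin (n+1) → ℝ) ℝ)
    (htr : ∀ (j : ℕ) (x y : Fin (n+1) → ℝ), tr j x y = anisoDil a ⇑φ₀ ⇑φ j (x - y)) :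
    ∃ E : SchwartzMap (Fin (n+1) → ℝ) ℝ →L[ℝ] ℝ,
      ∀ (η : SchwartzMap (Fin (n+1) → ℝ) ℝ)
        (c : ℕ → SchwartzMap (Fin (n+1) → ℝ) ℝ),
        -- `c j` is the Schwartz function `ψ̌_j * η : x ↦ ∫ ψ_j(y − x) η(y) dy`
        (∀ (j : ℕ) (x : Fin (n+1) → ℝ),
          c j x = ∫ y : Fin (n+1) → ℝ, anisoDil a ⇑ψ₀ ⇑ψ j (y - x) * η y) →
        Summable (fun j =>
          |∫ x in {x : Fin (n+1) → ℝ | 0 < x (Fin.last n)}, f (tr j x) * c j x|) ∧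
        HasSum (fun j =>
          ∫ x in {x : Fin (n+1) → ℝ | 0 < x (Fin.last n)}, f (tr j x) * c j x) (E η) := by
  have := hasTemperateGrowth_restrict volume {x : Fin (n+1) → ℝ | 0 < x (Fin.last n)}
  exact universal_extension_series_converges_general (fun i => one_pos.trans_le (ha i)) ψ₀ hψm f
    htr _

end
end
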